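/- arXiv:2011.10820 — 7 statements merged into one kernel-verified Lean document; each statement's English description precedes it below -/
import Mathlib

section
/- First fundamental theorem for GL(V) on vectors and covectors: Let d, h, k ≥ 1 and let P ∈ MvPolynomial ((Fin h × Fin d) ⊕ (Fin k × Fin d)) ℚ, viewed as a polynomial function of h vectors v_1,…,v_h ∈ ℚ^d (variables inl(j,a) = a-th coordinate of v_j) and k covectors φ_1,…,φ_k ∈ (ℚ^d)^* (variables inr(i,a) = a-th coordinate of φ_i). Suppose P is GL-invariant: for every invertible matrix g : Matrix (Fin d) (Fin d) ℚ and all v : Fin h → (Fin d → ℚ), φ : Fin k → (Fin d → ℚ), evaluating P at the point (fun (j,a) => (g.mulVec (v j)) a, fun (i,a) => ((g⁻¹ᵀ).mulVec (φ i)) a) equals evaluating P at (v, φ). Then P lies in the ℚ-subalgebra of MvPolynomial generated by the h·k bilinear polynomials q_{i,j} := ∑_{a : Fin d} X(inl(j,a)) * X(inr(i,a)) for i : Fin k, j : Fin h. -/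
/-!
Let `R` be the subalgebra generated by the pairings `q i j`. The argument uses Fischer's inner
product `⟨f, g⟩ = f(∂) g |₀`, which is positive definite over `ℚ` and for which multiplication by
`X i` is adjoint to `∂/∂X i`.

Adjoin a generic `d × d` matrix `N`, and consider the two substitutions
`χ f = f(N v, φ)` and `ψ f = f(v, Nᵀ φ)`. By density of the invertible matrices, an invariant `P`
satisfies `χ P = ψ P`. Suppose moreover that `P` is orthogonal to `R`. Then `⟨χ f, ψ P⟩ = 0` for
every polynomial `f` (`fischer_twistV_twistΦ`): the operator adjoint to multiplication by
`(N v_j)_a` sends `ψ P` to `∑ i, (φ_i)_a ψ (D i j P)`, where `D i j = ∑ b, ∂/∂(v_j)_b ∂/∂(φ_i)_b` is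
adjoint to multiplication by `q i j`, so that `D i j P` is again orthogonal to `R`; in the end only
the constant term `P(0) = ⟨1, P⟩ = 0` matters. Taking `f = P` gives `⟨ψ P, ψ P⟩ = 0`, hence
`ψ P = 0`, and specializing `N` to the identity matrix, `P = 0`.

An arbitrary invariant is then corrected by its orthogonal projection to the finite-dimensional
space of elements of `R` of bounded degree. The difference is orthogonal to all of `R`, since `R` is
spanned by homogeneous elements and polynomials of different degrees are orthogonal.
-/

namespace VectorCovectorFFT

open MvPolynomial

/-! ### Fischer's inner product -/

section Fischer

variable {σ : Type*} [Fintype σ]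

/-- Fischer's inner product `⟨f, g⟩ = f(∂) g |₀`: distinct monomials are orthogonal, and
`⟨X ^ m, X ^ m⟩ = m!`. -/
noncomputable def fischer : LinearMap.BilinForm ℚ (MvPolynomial σ ℚ) :=
  (basisMonomials σ ℚ).constr ℚ fun m => ((∏ i, (m i).factorial : ℕ) : ℚ) • lcoeff ℚ m

lemma fischer_monomial (m : σ →₀ ℕ) (a : ℚ) (g : MvPolynomial σ ℚ) :
    fischer (monomial m a) g = a * ((∏ i, (m i).factorial : ℕ) : ℚ) * coeff m g := by
  have h : monomial m a = a • basisMonomials σ ℚ m := by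
    simp [coe_basisMonomials, smul_monomial]
  rw [h, map_smul, fischer, Module.Basis.constr_basis]
  simp [lcoeff, mul_assoc]

lemma fischer_eq_sum (f g : MvPolynomial σ ℚ) :
    fischer f g =
      ∑ m ∈ f.support, coeff m f * ((∏ i, (m i).factorial : ℕ) : ℚ) * coeff m g := by
  conv_lhs => rw [f.as_sum, map_sum, LinearMap.sum_apply]
  exact Finset.sum_congr rfl fun m _ => fischer_monomial _ _ _

lemma fischer_comm (f g : MvPolynomial σ ℚ) : fischer f g = fischer g f := by
  classical
  have key : ∀ f g : MvPolynomial σ ℚ, fischer f g =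
      ∑ m ∈ f.support ∪ g.support,
        coeff m f * ((∏ i, (m i).factorial : ℕ) : ℚ) * coeff m g := by
    intro f g
    rw [fischer_eq_sum]
    refine Finset.sum_subset Finset.subset_union_left fun m _ hm => ?_
    rw [notMem_support_iff.1 hm]; ring
  rw [key, key, Finset.union_comm]
  exact Finset.sum_congr rfl fun m _ => by ring

lemma eq_zero_of_fischer_self {f : MvPolynomial σ ℚ} (h : fischer f f = 0) : f = 0 := by
  rw [fischer_eq_sum, Finset.sum_eq_zero_iff_of_nonneg] at h
  · by_contra hf
    obtain ⟨m, hm⟩ := Finset.nonempty_iff_ne_empty.2 (mt support_eq_empty.1 hf)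
    have h1 := h m hm
    have h2 : ((∏ i, (m i).factorial : ℕ) : ℚ) ≠ 0 :=
      Nat.cast_ne_zero.2 (Finset.prod_ne_zero_iff.2 fun i _ => Nat.factorial_ne_zero _)
    simp only [mul_eq_zero, h2, or_false, or_self] at h1
    exact (mem_support_iff.1 hm) h1
  · intro m _
    have : coeff m f * ((∏ i, (m i).factorial : ℕ) : ℚ) * coeff m f
        = ((∏ i, (m i).factorial : ℕ) : ℚ) * (coeff m f * coeff m f) := by ring
    rw [this]
    exact mul_nonneg (Nat.cast_nonneg _) (mul_self_nonneg _)

/-- Multiplication by a variable is adjoint to the corresponding partial derivative. -/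
lemma fischer_X_mul (i : σ) (f g : MvPolynomial σ ℚ) :
    fischer (X i * f) g = fischer f (pderiv i g) := by
  classical
  induction f using MvPolynomial.induction_on' with
  | add p q hp hq => simp [mul_add, hp, hq]
  | monomial m a =>
    rw [X, monomial_mul, one_mul, add_comm, fischer_monomial, fischer_monomial, coeff_pderiv]
    have : ∏ j, ((m + Finsupp.single i 1 : σ →₀ ℕ) j).factorial
        = (∏ j, (m j).factorial) * (m i + 1) := by
      rw [← Finset.mul_prod_erase _ _ (Finset.mem_univ i),
        ← Finset.mul_prod_erase _ (fun j => (m j).factorial) (Finset.mem_univ i)]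
      have h1 : ∏ j ∈ Finset.univ.erase i, ((m + Finsupp.single i 1 : σ →₀ ℕ) j).factorial
          = ∏ j ∈ Finset.univ.erase i, (m j).factorial :=
        Finset.prod_congr rfl fun j hj => by
          simp [(Finset.ne_of_mem_erase hj).symm]
      rw [h1]
      simp only [Finsupp.add_apply, Finsupp.single_eq_same, Nat.factorial_succ]
      ring
    rw [this]
    push_cast
    ring

lemma fischer_C (a : ℚ) (g : MvPolynomial σ ℚ) : fischer (C a) g = a * constantCoeff g := by
  rw [C_apply, fischer_monomial]
  simp [constantCoeff_eq]

lemma fischer_eq_zero_of_degree {f g : MvPolynomial σ ℚ} {n D : ℕ} (hf : f.IsHomogeneous n)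
    (hg : g.totalDegree ≤ D) (hn : D < n) : fischer f g = 0 := by
  rw [fischer_eq_sum]
  refine Finset.sum_eq_zero fun m hm => ?_
  have h1 : m.degree = n := by
    rw [Finsupp.degree_eq_weight_one]; exact hf (mem_support_iff.1 hm)
  rw [coeff_eq_zero_of_totalDegree_lt (f := g) (d := m), mul_zero]
  have : ∑ i ∈ m.support, m i = n := h1
  omega

/-- Orthogonal projection to a finite-dimensional subspace. -/
lemma exists_projection (W : Submodule ℚ (MvPolynomial σ ℚ)) [FiniteDimensional ℚ W]
    (P : MvPolynomial σ ℚ) : ∃ r ∈ W, ∀ w ∈ W, fischer w (P - r) = 0 := by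
  -- The inner product identifies `W` with its dual; `r` represents the functional `⟨P, ·⟩` on `W`.
  have hinj : Function.Injective (fischer.restrict W) := by
    rw [← LinearMap.ker_eq_bot, LinearMap.ker_eq_bot']
    exact fun x hx => Subtype.ext (eq_zero_of_fischer_self (LinearMap.congr_fun hx x))
  have hsurj := (LinearMap.injective_iff_surjective_of_finrank_eq_finrank
    (Subspace.dual_finrank_eq (K := ℚ) (V := W)).symm).1 hinj
  obtain ⟨r, hr⟩ := hsurj ((fischer P).domRestrict W)
  refine ⟨r, r.2, fun w hw => ?_⟩
  have h1 : fischer (r : MvPolynomial σ ℚ) w = fischer P w := LinearMap.congr_fun hr ⟨w, hw⟩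
  rw [map_sub, fischer_comm w P, fischer_comm w r, h1, sub_self]

end Fischer

/-! ### The pairings and the two substitutions -/

variable {d h k : ℕ}

/-- The coordinates of `h` vectors and `k` covectors. -/
abbrev Var (d h k : ℕ) := (Fin h × Fin d) ⊕ (Fin k × Fin d)

/-- The coordinates of `h` vectors and `k` covectors, and the entries of a `d × d` matrix `N`. -/
abbrev VarN (d h k : ℕ) := Var d h k ⊕ (Fin d × Fin d)

/-- The pairing of the `i`-th covector with the `j`-th vector. -/
noncomputable def pairing (i : Fin k) (j : Fin h) : MvPolynomial (Var d h k) ℚ :=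
  ∑ a : Fin d, X (Sum.inl (j, a)) * X (Sum.inr (i, a))

/-- The subalgebra generated by the pairings. -/
noncomputable def pairingAlg (d h k : ℕ) : Subalgebra ℚ (MvPolynomial (Var d h k) ℚ) :=
  Algebra.adjoin ℚ {q | ∃ (i : Fin k) (j : Fin h), q = pairing i j}

/-- The operator `∑ b, ∂/∂(v_j)_b ∂/∂(φ_i)_b`, adjoint to multiplication by `pairing i j`. -/
noncomputable def pairingOp (i : Fin k) (j : Fin h) (P : MvPolynomial (Var d h k) ℚ) :
    MvPolynomial (Var d h k) ℚ :=
  ∑ b : Fin d, pderiv (Sum.inr (i, b)) (pderiv (Sum.inl (j, b)) P)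

/-- The entry `(v_j)_a`, as a polynomial in the larger set of variables. -/
noncomputable def xV (j : Fin h) (a : Fin d) : MvPolynomial (VarN d h k) ℚ :=
  X (Sum.inl (Sum.inl (j, a)))

/-- The entry `(φ_i)_a`, as a polynomial in the larger set of variables. -/
noncomputable def xΦ (i : Fin k) (a : Fin d) : MvPolynomial (VarN d h k) ℚ :=
  X (Sum.inl (Sum.inr (i, a)))

/-- The entry `N_{ab}`. -/
noncomputable def xN (a b : Fin d) : MvPolynomial (VarN d h k) ℚ :=
  X (Sum.inr (a, b))

/-- The substitution `f ↦ f(N v, φ)`. -/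
noncomputable def twistV : MvPolynomial (Var d h k) ℚ →ₐ[ℚ] MvPolynomial (VarN d h k) ℚ :=
  aeval (Sum.elim (fun p => ∑ b, xN p.2 b * xV p.1 b) (fun p => xΦ p.1 p.2))

/-- The substitution `f ↦ f(v, Nᵀ φ)`. -/
noncomputable def twistΦ : MvPolynomial (Var d h k) ℚ →ₐ[ℚ] MvPolynomial (VarN d h k) ℚ :=
  aeval (Sum.elim (fun p => xV p.1 p.2) (fun p => ∑ b, xN b p.2 * xΦ p.1 b))

/-- Polynomials in the covectors alone, in the larger set of variables. -/
noncomputable def inclΦ : MvPolynomial (Fin k × Fin d) ℚ →ₐ[ℚ] MvPolynomial (VarN d h k) ℚ :=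
  aeval fun p => xΦ p.1 p.2

lemma twistΦ_injective : Function.Injective (twistΦ (d := d) (h := h) (k := k)) := by
  classical
  -- Specializing `N` to the identity matrix is a left inverse.
  let ε : MvPolynomial (VarN d h k) ℚ →ₐ[ℚ] MvPolynomial (Var d h k) ℚ :=
    aeval (Sum.elim X fun p => if p.1 = p.2 then 1 else 0)
  have hε : ε.comp twistΦ = AlgHom.id ℚ _ := by
    apply MvPolynomial.algHom_ext
    rintro (p | p) <;> simp [ε, twistΦ, xV, xΦ, xN]
  exact Function.LeftInverse.injective (g := ε) fun f => DFunLike.congr_fun hε f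

lemma twistV_eq_twistΦ_of_mem {r : MvPolynomial (Var d h k) ℚ} (hr : r ∈ pairingAlg d h k) :
    twistV r = twistΦ r := by
  have : pairingAlg d h k ≤ AlgHom.equalizer twistV twistΦ := by
    refine Algebra.adjoin_le ?_
    rintro _ ⟨i, j, rfl⟩
    simp only [pairing, SetLike.mem_coe, AlgHom.mem_equalizer, map_sum, map_mul, twistV, twistΦ,
      aeval_X, Sum.elim_inl, Sum.elim_inr, Finset.sum_mul, Finset.mul_sum]
    rw [Finset.sum_comm]
    exact Finset.sum_congr rfl fun a _ => Finset.sum_congr rfl fun b _ => by ring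
  exact this hr

/-- Invariance under invertible matrices extends to the generic matrix `N`, by Zariski density. -/
lemma twistV_eq_twistΦ_of_invariant (P : MvPolynomial (Var d h k) ℚ)
    (hP : ∀ g : Matrix (Fin d) (Fin d) ℚ, IsUnit g →
      ∀ (v : Fin h → Fin d → ℚ) (φ : Fin k → Fin d → ℚ),
        MvPolynomial.eval
          (Sum.elim (fun p : Fin h × Fin d => g.mulVec (v p.1) p.2)
            (fun p : Fin k × Fin d => (g⁻¹).transpose.mulVec (φ p.1) p.2)) P =
        MvPolynomial.eval
          (Sum.elim (fun p : Fin h × Fin d => v p.1 p.2)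
            (fun p : Fin k × Fin d => φ p.1 p.2)) P) :
    twistV P = twistΦ P := by
  classical
  let Δ : MvPolynomial (VarN d h k) ℚ := (Matrix.of fun a b => xN a b).det
  have hΔeval : ∀ x : VarN d h k → ℚ,
      eval x Δ = (Matrix.of fun a b : Fin d => x (Sum.inr (a, b))).det := by
    intro x
    rw [RingHom.map_det]
    congr 1
    ext a b
    simp [xN]
  have hΔ : Δ ≠ 0 := by
    intro h0
    have h1 := hΔeval (Sum.elim 0 fun p => if p.1 = p.2 then 1 else 0)
    have h2 : (Matrix.of fun a b : Fin d => (if a = b then 1 else 0 : ℚ)) = 1 := by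
      ext a b; simp [Matrix.one_apply]
    simp [h0, h2] at h1
  refine sub_eq_zero.1 ((mul_eq_zero.1 (?_ : (twistV P - twistΦ P) * Δ = 0)).resolve_right hΔ)
  refine MvPolynomial.funext fun x => ?_
  rw [map_mul, hΔeval, map_zero, map_sub]
  set g : Matrix (Fin d) (Fin d) ℚ := Matrix.of fun a b => x (Sum.inr (a, b)) with hg
  by_cases hdet : g.det = 0
  · rw [hdet, mul_zero]
  have hu : IsUnit g.det := isUnit_iff_ne_zero.2 hdet
  let v : Fin h → Fin d → ℚ := fun j a => x (Sum.inl (Sum.inl (j, a)))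
  let φ : Fin k → Fin d → ℚ := fun i a => x (Sum.inl (Sum.inr (i, a)))
  have key := hP g ((Matrix.isUnit_iff_isUnit_det g).2 hu) v fun i => g.transpose.mulVec (φ i)
  have hinv : ∀ w : Fin d → ℚ, (g⁻¹).transpose.mulVec (g.transpose.mulVec w) = w := by
    intro w
    rw [Matrix.mulVec_mulVec, ← Matrix.transpose_mul, Matrix.mul_nonsing_inv g hu,
      Matrix.transpose_one, Matrix.one_mulVec]
  simp only [hinv] at key
  have e1 : eval x (twistV P) = eval (Sum.elim (fun p : Fin h × Fin d => g.mulVec (v p.1) p.2)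
      (fun p : Fin k × Fin d => φ p.1 p.2)) P := by
    rw [twistV, ← coe_aeval_eq_eval, ← coe_aeval_eq_eval, RingHom.coe_coe, RingHom.coe_coe,
      ← AlgHom.comp_apply, comp_aeval]
    congr 2
    funext p
    rcases p with p | p <;> simp [v, φ, g, xV, xΦ, xN, Matrix.mulVec, dotProduct]
  have e2 : eval x (twistΦ P) = eval (Sum.elim (fun p : Fin h × Fin d => v p.1 p.2)
      (fun p : Fin k × Fin d => g.transpose.mulVec (φ p.1) p.2)) P := by
    rw [twistΦ, ← coe_aeval_eq_eval, ← coe_aeval_eq_eval, RingHom.coe_coe, RingHom.coe_coe,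
      ← AlgHom.comp_apply, comp_aeval]
    congr 2
    funext p
    rcases p with p | p <;> simp [v, φ, g, xV, xΦ, xN, Matrix.mulVec, dotProduct]
  rw [e1, e2, key, sub_self, zero_mul]

/-! ### Derivatives of `f(v, Nᵀ φ)` -/

lemma pderiv_V_twistΦ (j : Fin h) (b : Fin d) (P : MvPolynomial (Var d h k) ℚ) :
    pderiv (Sum.inl (Sum.inl (j, b))) (twistΦ P) = twistΦ (pderiv (Sum.inl (j, b)) P) := by
  classical
  induction P using MvPolynomial.induction_on with
  | C a => simp [twistΦ]
  | add p q hp hq => simp [hp, hq]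
  | mul_X p n hp =>
    rw [map_mul, pderiv_mul, pderiv_mul, hp, map_add, map_mul, map_mul]
    congr 2
    rcases n with n | n
    · simp only [twistΦ, aeval_X, Sum.elim_inl, xV, pderiv_X, Pi.single_apply, Sum.inl.injEq]
      split_ifs <;> simp
    · simp [twistΦ, xΦ, xN]

lemma pderiv_N_twistΦ (a b : Fin d) (P : MvPolynomial (Var d h k) ℚ) :
    pderiv (Sum.inr (a, b)) (twistΦ P)
      = ∑ i, xΦ i a * twistΦ (pderiv (Sum.inr (i, b)) P) := by
  classical
  induction P using MvPolynomial.induction_on with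
  | C a => simp [twistΦ]
  | add p q hp hq => simp [hp, hq, mul_add, Finset.sum_add_distrib]
  | mul_X p n hp =>
    rw [map_mul, pderiv_mul, hp]
    simp only [pderiv_mul, map_add, map_mul, mul_add, Finset.sum_add_distrib]
    congr 1
    · rw [Finset.sum_mul]
      exact Finset.sum_congr rfl fun i _ => by ring
    · have h2 : pderiv (Sum.inr (a, b)) (twistΦ (X n : MvPolynomial (Var d h k) ℚ))
          = ∑ i, xΦ i a * twistΦ (pderiv (Sum.inr (i, b)) (X n)) := by
        rcases n with ⟨j, c⟩ | ⟨i, c⟩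
        · simp [twistΦ, xV]
        · by_cases hc : c = b
          · subst hc
            simp [twistΦ, xΦ, xN, pderiv_X, Pi.single_apply, apply_ite]
          · simp [twistΦ, xΦ, xN, pderiv_X, hc]
      rw [h2, Finset.mul_sum]
      exact Finset.sum_congr rfl fun i _ => by ring

/-- The operator `∑ b, ∂/∂(v_j)_b ∂/∂N_{ab}`, adjoint to multiplication by `(N v_j)_a`, acts on
`f(v, Nᵀ φ)` through the operators adjoint to the pairings. -/
lemma sum_pderiv_twistΦ (j : Fin h) (a : Fin d) (P : MvPolynomial (Var d h k) ℚ) :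
    ∑ b, pderiv (Sum.inr (a, b)) (pderiv (Sum.inl (Sum.inl (j, b))) (twistΦ P))
      = ∑ i, xΦ i a * twistΦ (pairingOp i j P) := by
  simp only [pderiv_V_twistΦ, pderiv_N_twistΦ, pairingOp, map_sum, Finset.mul_sum]
  exact Finset.sum_comm

/-! ### Invariants orthogonal to the pairings -/

/-- The orthogonality of `P` to the algebra generated by the pairings. -/
def IsOrtho (P : MvPolynomial (Var d h k) ℚ) : Prop :=
  ∀ r ∈ pairingAlg d h k, fischer r P = 0

lemma pairing_mem (i : Fin k) (j : Fin h) :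
    (pairing i j : MvPolynomial (Var d h k) ℚ) ∈ pairingAlg d h k :=
  Algebra.subset_adjoin ⟨i, j, rfl⟩

lemma IsOrtho.pairingOp {P : MvPolynomial (Var d h k) ℚ} (hP : IsOrtho P) (i : Fin k)
    (j : Fin h) : IsOrtho (pairingOp i j P) := by
  intro r hr
  have h1 := hP (pairing i j * r) (mul_mem (pairing_mem i j) hr)
  rw [← h1]
  simp [VectorCovectorFFT.pairingOp, pairing, Finset.sum_mul, LinearMap.sum_apply, mul_assoc,
    fischer_X_mul]

lemma IsOrtho.constantCoeff_eq_zero {P : MvPolynomial (Var d h k) ℚ} (hP : IsOrtho P) :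
    constantCoeff P = 0 := by
  have := hP (C 1) (by rw [C_1]; exact one_mem _)
  rwa [fischer_C, one_mul] at this

lemma pderiv_mem_span {σ : Type*} {S : Set σ} {i : σ} (hi : i ∉ S) {f : MvPolynomial σ ℚ}
    (hf : f ∈ Ideal.span ((X : σ → MvPolynomial σ ℚ) '' S)) :
    pderiv i f ∈ Ideal.span ((X : σ → MvPolynomial σ ℚ) '' S) := by
  induction hf using Submodule.span_induction with
  | mem x hx =>
    obtain ⟨s, hs, rfl⟩ := hx
    rw [pderiv_X_of_ne (ne_of_mem_of_not_mem hs hi)]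
    exact zero_mem _
  | zero => simp
  | add x y _ _ hx hy => rw [map_add]; exact add_mem hx hy
  | smul a x hx' hx =>
    rw [smul_eq_mul, pderiv_mul]
    exact add_mem (Ideal.mul_mem_left _ _ hx') (Ideal.mul_mem_left _ _ hx)

/-- The ideal of polynomials that vanish for `v = 0`, `N = 0`. -/
noncomputable def idealVN (d h k : ℕ) : Ideal (MvPolynomial (VarN d h k) ℚ) :=
  Ideal.span (X '' {t | ∀ p : Fin k × Fin d, t ≠ Sum.inl (Sum.inr p)})

lemma fischer_inclΦ_eq_zero (e : MvPolynomial (Fin k × Fin d) ℚ)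
    {f : MvPolynomial (VarN d h k) ℚ} (hf : f ∈ idealVN d h k) : fischer (inclΦ e) f = 0 := by
  induction e using MvPolynomial.induction_on generalizing f with
  | C a =>
    have h0 : constantCoeff f = 0 := by
      have : idealVN d h k ≤ RingHom.ker constantCoeff := by
        refine Ideal.span_le.2 ?_
        rintro _ ⟨t, _, rfl⟩
        simp
      exact this hf
    have : inclΦ (C a) = (C a : MvPolynomial (VarN d h k) ℚ) := by simp [inclΦ]
    rw [this, fischer_C, h0, mul_zero]
  | add p q hp hq => rw [map_add, map_add, LinearMap.add_apply, hp hf, hq hf, add_zero]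
  | mul_X p n hp =>
    have : inclΦ (p * X n) = (X (Sum.inl (Sum.inr n)) : MvPolynomial (VarN d h k) ℚ) * inclΦ p := by
      simp [inclΦ, xΦ, mul_comm]
    rw [this, fischer_X_mul]
    have hn : Sum.inl (Sum.inr n) ∉
        {t : VarN d h k | ∀ p : Fin k × Fin d, t ≠ Sum.inl (Sum.inr p)} :=
      fun hn => hn n rfl
    exact hp (pderiv_mem_span hn hf)

lemma twistΦ_mem_idealVN {P : MvPolynomial (Var d h k) ℚ} (hP : constantCoeff P = 0) :
    twistΦ P ∈ idealVN d h k := by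
  have key : ∀ P : MvPolynomial (Var d h k) ℚ,
      twistΦ P - C (constantCoeff P) ∈ idealVN d h k := by
    intro P
    induction P using MvPolynomial.induction_on with
    | C a => simp [twistΦ]
    | add p q hp hq =>
      rw [map_add, map_add, map_add, add_sub_add_comm]
      exact add_mem hp hq
    | mul_X p n hp =>
      have hn : twistΦ (X n : MvPolynomial (Var d h k) ℚ) ∈ idealVN d h k := by
        rcases n with n | n
        · simp only [twistΦ, aeval_X, Sum.elim_inl]
          exact Ideal.subset_span ⟨_, by simp, rfl⟩
        · simp only [twistΦ, aeval_X, Sum.elim_inr]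
          exact sum_mem fun b _ => Ideal.mul_mem_right _ _
            (Ideal.subset_span ⟨Sum.inr (b, n.2), by simp, rfl⟩)
      simp only [map_mul, constantCoeff_X, mul_zero, map_zero, sub_zero]
      exact Ideal.mul_mem_left _ _ hn
  simpa [hP] using key P

lemma pderiv_inclΦ (t : VarN d h k) (ht : ∀ p : Fin k × Fin d, t ≠ Sum.inl (Sum.inr p))
    (c : MvPolynomial (Fin k × Fin d) ℚ) : pderiv t (inclΦ c) = 0 := by
  induction c using MvPolynomial.induction_on with
  | C a => simp [inclΦ]
  | add p q hp hq => rw [map_add, map_add, hp, hq, add_zero]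
  | mul_X p n hp =>
    rw [map_mul, pderiv_mul, hp]
    simp [inclΦ, xΦ, pderiv_X_of_ne (ht n).symm]

/-- If `g` pairs to zero with `c(φ) P(v, Nᵀ φ)` for all `c` and all `P` orthogonal to the pairings,
then so does `(N v_j)_a g`. -/
lemma fischer_mul_eq_zero {g : MvPolynomial (VarN d h k) ℚ}
    (hg : ∀ (c : MvPolynomial (Fin k × Fin d) ℚ) (P : MvPolynomial (Var d h k) ℚ), IsOrtho P →
      fischer g (inclΦ c * twistΦ P) = 0)
    (j : Fin h) (a : Fin d) (c : MvPolynomial (Fin k × Fin d) ℚ)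
    {P : MvPolynomial (Var d h k) ℚ} (hP : IsOrtho P) :
    fischer ((∑ b, xN a b * xV j b) * g) (inclΦ c * twistΦ P) = 0 := by
  have h1 : fischer ((∑ b, xN a b * xV j b) * g) (inclΦ c * twistΦ P)
      = fischer g (inclΦ c *
        ∑ b, pderiv (Sum.inr (a, b)) (pderiv (Sum.inl (Sum.inl (j, b))) (twistΦ P))) := by
    rw [Finset.mul_sum, map_sum, Finset.sum_mul, map_sum, LinearMap.sum_apply]
    refine Finset.sum_congr rfl fun b _ => ?_
    rw [mul_comm (xN a b), mul_assoc, xV, xN, fischer_X_mul, fischer_X_mul]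
    have z1 := pderiv_inclΦ (d := d) (h := h) (k := k) (Sum.inl (Sum.inl (j, b))) (by simp) c
    have z2 := pderiv_inclΦ (d := d) (h := h) (k := k) (Sum.inr (a, b)) (by simp) c
    simp [z1, z2]
  rw [h1, sum_pderiv_twistΦ, Finset.mul_sum, map_sum]
  refine Finset.sum_eq_zero fun i _ => ?_
  have h2 : inclΦ c * (xΦ i a * twistΦ (pairingOp i j P))
      = inclΦ (c * X (i, a)) * twistΦ (pairingOp i j P) := by
    simp [inclΦ, mul_assoc]
  rw [h2]
  exact hg _ _ (hP.pairingOp i j)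

/-- If `P` is orthogonal to the algebra of pairings, then `f(N v, φ)` is orthogonal to
`P(v, Nᵀ φ)` for every `f`. -/
lemma fischer_twistV_twistΦ (f : MvPolynomial (Var d h k) ℚ) {P : MvPolynomial (Var d h k) ℚ}
    (hP : IsOrtho P) : fischer (twistV f) (twistΦ P) = 0 := by
  -- The auxiliary factors `e(φ)` and `c(φ)` make the induction on `f` go through.
  have key : ∀ (f : MvPolynomial (Var d h k) ℚ) (e c : MvPolynomial (Fin k × Fin d) ℚ)
      (P : MvPolynomial (Var d h k) ℚ), IsOrtho P →
      fischer (twistV f * inclΦ e) (inclΦ c * twistΦ P) = 0 := by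
    intro f
    induction f using MvPolynomial.induction_on with
    | C a =>
      intro e c P hP
      have : twistV (C a) * inclΦ e = (inclΦ (C a * e) : MvPolynomial (VarN d h k) ℚ) := by
        simp [twistV, inclΦ]
      rw [this]
      exact fischer_inclΦ_eq_zero _
        (Ideal.mul_mem_left _ _ (twistΦ_mem_idealVN hP.constantCoeff_eq_zero))
    | add p q hp hq =>
      intro e c P hP
      rw [map_add, add_mul, map_add, LinearMap.add_apply, hp e c P hP, hq e c P hP, add_zero]
    | mul_X p n hp =>
      intro e c P hP
      rcases n with ⟨j, a⟩ | n
      · have : twistV (p * X (Sum.inl (j, a))) * inclΦ e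
            = (∑ b, xN a b * xV j b : MvPolynomial (VarN d h k) ℚ) * (twistV p * inclΦ e) := by
          simp only [map_mul, twistV, aeval_X, Sum.elim_inl]
          ring
        rw [this]
        exact fischer_mul_eq_zero (hp e) j a c hP
      · have : twistV (p * X (Sum.inr n)) * inclΦ e
            = (twistV p * inclΦ (X n * e) : MvPolynomial (VarN d h k) ℚ) := by
          simp only [map_mul, twistV, inclΦ, aeval_X, Sum.elim_inr]
          ring
        rw [this]
        exact hp _ c P hP
  simpa using key f 1 1 P hP

/-- An invariant orthogonal to the algebra of pairings vanishes. -/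
lemma eq_zero_of_isOrtho {P : MvPolynomial (Var d h k) ℚ} (hP : IsOrtho P)
    (hinv : twistV P = twistΦ P) : P = 0 := by
  have h1 := fischer_twistV_twistΦ P hP
  rw [hinv] at h1
  exact twistΦ_injective (by rw [eq_zero_of_fischer_self h1, map_zero])

/-- Since the algebra of pairings is spanned by homogeneous elements, orthogonality of a polynomial
of degree at most `D` needs to be tested only in degrees up to `D`. -/
lemma isOrtho_of_degree_le {P : MvPolynomial (Var d h k) ℚ} {D : ℕ} (hD : P.totalDegree ≤ D)
    (hP : ∀ r ∈ pairingAlg d h k, r.totalDegree ≤ D → fischer r P = 0) : IsOrtho P := by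
  intro r hr
  have hr' : r ∈ Submodule.span ℚ (Submonoid.closure
      {q : MvPolynomial (Var d h k) ℚ | ∃ (i : Fin k) (j : Fin h), q = pairing i j} :
        Set (MvPolynomial (Var d h k) ℚ)) := by
    rw [← Algebra.adjoin_eq_span]; exact hr
  induction hr' using Submodule.span_induction with
  | mem x hx =>
    have hhom : ∃ n, x.IsHomogeneous n := by
      induction hx using Submonoid.closure_induction with
      | mem y hy =>
        obtain ⟨i, j, rfl⟩ := hy
        exact ⟨1 + 1, IsHomogeneous.sum _ _ _ fun a _ =>
          (isHomogeneous_X ℚ _).mul (isHomogeneous_X ℚ _)⟩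
      | one => exact ⟨0, isHomogeneous_one _ _⟩
      | mul y z hy hz ihy ihz =>
        have my : ∀ w ∈ Submonoid.closure
            {q : MvPolynomial (Var d h k) ℚ | ∃ (i : Fin k) (j : Fin h), q = pairing i j},
            w ∈ pairingAlg d h k := fun w hw =>
          (Submonoid.closure_le (S := (pairingAlg d h k).toSubmonoid)).2
            Algebra.subset_adjoin hw
        obtain ⟨m, hm⟩ := ihy (my y hy)
        obtain ⟨n, hn⟩ := ihz (my z hz)
        exact ⟨m + n, hm.mul hn⟩
    obtain ⟨n, hn⟩ := hhom
    rcases le_or_gt n D with hle | hlt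
    · exact hP x hr (hn.totalDegree_le.trans hle)
    · exact fischer_eq_zero_of_degree hn hD hlt
  | zero => simp
  | add x y hx hy ihx ihy =>
    rw [← Algebra.adjoin_eq_span] at hx hy
    rw [map_add, LinearMap.add_apply, ihx hx, ihy hy, add_zero]
  | smul a x hx ihx =>
    rw [← Algebra.adjoin_eq_span] at hx
    rw [map_smul, LinearMap.smul_apply, ihx hx, smul_zero]

lemma mem_pairingAlg_of_twist (P : MvPolynomial (Var d h k) ℚ) (hinv : twistV P = twistΦ P) :
    P ∈ pairingAlg d h k := by
  let W : Submodule ℚ (MvPolynomial (Var d h k) ℚ) :=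
    Subalgebra.toSubmodule (pairingAlg d h k) ⊓ restrictTotalDegree _ ℚ P.totalDegree
  have : FiniteDimensional ℚ W := Submodule.finiteDimensional_of_le inf_le_right
  obtain ⟨r, hr, hr'⟩ := exists_projection W P
  have hrdeg : r.totalDegree ≤ P.totalDegree := (mem_restrictTotalDegree _ _ _).1 hr.2
  have hortho : IsOrtho (P - r) :=
    isOrtho_of_degree_le ((totalDegree_sub _ _).trans (max_le le_rfl hrdeg)) fun t ht htd =>
      hr' t ⟨ht, (mem_restrictTotalDegree _ _ _).2 htd⟩
  have h0 := eq_zero_of_isOrtho hortho (by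
    rw [map_sub, map_sub, hinv, twistV_eq_twistΦ_of_mem hr.1])
  rw [sub_eq_zero.1 h0]
  exact hr.1

end VectorCovectorFFT


/-- **First fundamental theorem for `GL(V)` acting on vectors and covectors.**  A polynomial
function of `h` vectors and `k` covectors in `ℚ^d` which is invariant under the action
`v ↦ g v`, `φ ↦ (g⁻¹)ᵀ φ` of every invertible matrix `g` lies in the subalgebra generated by
the `h·k` pairings `⟨φ_i | v_j⟩ = ∑_a X(inl (j,a)) * X(inr (i,a))`. -/
theorem FFT_vectors_covectors (d h k : ℕ) (hd : 1 ≤ d) (hh : 1 ≤ h) (hk : 1 ≤ k)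
    (P : MvPolynomial ((Fin h × Fin d) ⊕ (Fin k × Fin d)) ℚ)
    (hP : ∀ g : Matrix (Fin d) (Fin d) ℚ, IsUnit g →
      ∀ (v : Fin h → Fin d → ℚ) (φ : Fin k → Fin d → ℚ),
        MvPolynomial.eval
          (Sum.elim (fun p : Fin h × Fin d => g.mulVec (v p.1) p.2)
            (fun p : Fin k × Fin d => (g⁻¹).transpose.mulVec (φ p.1) p.2)) P =
        MvPolynomial.eval
          (Sum.elim (fun p : Fin h × Fin d => v p.1 p.2)
            (fun p : Fin k × Fin d => φ p.1 p.2)) P) :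
    P ∈ Algebra.adjoin ℚ
      {q : MvPolynomial ((Fin h × Fin d) ⊕ (Fin k × Fin d)) ℚ |
        ∃ (i : Fin k) (j : Fin h), q = ∑ a : Fin d,
          MvPolynomial.X (Sum.inl (j, a)) * MvPolynomial.X (Sum.inr (i, a))} :=
  VectorCovectorFFT.mem_pairingAlg_of_twist P
    (VectorCovectorFFT.twistV_eq_twistΦ_of_invariant P hP)
end

section
/- Second fundamental theorem for determinantal ideals: Let h, k ≥ 1 and d ≥ 0, and let I be the ideal of all P ∈ MvPolynomial (Fin h × Fin k) ℚ such that for every matrix A : Matrix (Fin h) (Fin k) ℚ with A.rank ≤ d one has eval (fun p => A p.1 p.2) P = 0. Then (a) I is nonzero if and only if d < min h k, and (b) if d < min h k, I equals the ideal generated by the determinants of all (d+1)×(d+1) minors of the generic matrix, i.e. by the polynomials det((X.submatrix r c)) where X : Matrix (Fin h) (Fin k) (MvPolynomial (Fin h × Fin k) ℚ) is the matrix of variables X p q := X(p,q), and r : Fin (d+1) ↪ Fin h, c : Fin (d+1) ↪ Fin k run over all strictly increasing (injective) choices of d+1 rows and d+1 columns. -/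
/-!
The proof exhibits the monomials that survive modulo the minors and shows that they stay linearly
independent after the substitution `X = B * C`, with `B` of size `h × d` and `C` of size `d × k`.
A monomial is a multiset of cells `(p, q)`; call it *standard* if it contains no `d + 1` cells
along which the row strictly increases and the column strictly decreases.

*Spanning* (`cellMonomial_mem`). In the Leibniz expansion of a minor, the term on the antidiagonal
has strictly smaller weight `∑ (p + 1) * (q + 1)` than every other term, by the strict
rearrangement inequality (`sum_lt_sum_perm`). So modulo the minors a nonstandard monomial is a
combination of monomials of the same degree and larger weight; as the weight is bounded in a given
degree, every polynomial is congruent to a combination of standard monomials.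

*Independence* (`eq_zero_of_sum_genProd_eq_zero`). By Mirsky's theorem (`mirsky`) the cells of a
standard monomial `t` can be coloured with `d` colours so that each colour class is a chain for the
product order. The colouring selects a monomial `u` in the entries of `B` and `C` which occurs in
the image of `t` with positive coefficient. If `u` also occurs in the image of `t'`, then `t'` has
a colouring whose classes have the same rows and the same columns as those of `t`. For each cell
`a`, the number of cells `≥ a` in a colour class is at most the smaller of the number of its rows
`≥ a.1` and the number of its columns `≥ a.2`, with equality for chains. Hence `t'` has at most as
many cells `≥ a` as `t`, for every `a` (`countP_le_of_content_eq`). These numbers add up to the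
weight and determine the multiset (`eq_of_countP`), so in a vanishing linear combination of images
of standard monomials, a term `t` of least weight is the only one in which its `u` occurs, and its
coefficient is zero.

A polynomial vanishing on all matrices of rank at most `d` maps to zero under `X = B * C`, so its
standard part vanishes, which leaves an element of the ideal of minors.
-/

open MvPolynomial

/-! ### Two combinatorial lemmas -/

/-- Mirsky's theorem for a transitive relation: a set without a chain of length `d + 1` is a union
of `d` antichains. Elements with no predecessor in the set form the first antichain. -/
theorem mirsky {α : Type*} (R : α → α → Prop) (hR : ∀ x y z, R x y → R y z → R x z)
    (d : ℕ) (S : Set α) :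
    (∃ z : Fin (d + 1) → α, (∀ i j, i < j → R (z i) (z j)) ∧ ∀ i, z i ∈ S) ∨
    ∃ f : α → ℕ, (∀ x ∈ S, f x < d) ∧ ∀ x ∈ S, ∀ y ∈ S, f x = f y → ¬ R x y := by
  classical
  induction d generalizing S with
  | zero =>
    rcases S.eq_empty_or_nonempty with rfl | ⟨x, hx⟩
    · right
      exact ⟨fun _ => 0, by simp, by simp⟩
    · left
      refine ⟨fun _ => x, fun i j hij => ?_, fun _ => hx⟩
      omega
  | succ d ih =>
    rcases ih {x ∈ S | ∃ y ∈ S, R y x} with ⟨z, hz, hzS⟩ | ⟨f, hf, hfR⟩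
    · left
      obtain ⟨y, hyS, hy⟩ := (hzS 0).2
      refine ⟨Fin.cons y z, fun i j hij => ?_, fun i => ?_⟩
      · have hj : j ≠ 0 := by
          rintro rfl
          exact absurd hij (Fin.not_lt_zero i)
        obtain ⟨j, rfl⟩ := Fin.exists_succ_eq.2 hj
        refine Fin.cases (fun _ => ?_) (fun i hij => ?_) i hij
        · rcases Fin.eq_zero_or_eq_succ j with rfl | ⟨j', rfl⟩
          · simpa using hy
          · simpa using hR _ _ _ hy (hz 0 _ (Fin.succ_pos j'))
        · simpa using hz i j (by simpa using hij)
      · refine Fin.cases ?_ (fun i => ?_) i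
        · simpa using hyS
        · simpa using (hzS i).1
    · right
      refine ⟨fun x => if ∃ y ∈ S, R y x then f x + 1 else 0, fun x hx => ?_, fun x hx y hy => ?_⟩
      · dsimp only
        split_ifs with h
        · have := hf x ⟨hx, h⟩
          omega
        · omega
      · intro hxy hRxy
        have h2 : ∃ y' ∈ S, R y' y := ⟨x, hx, hRxy⟩
        dsimp only at hxy
        rw [if_pos h2] at hxy
        split_ifs at hxy with h1
        exact hfR x ⟨hx, h1⟩ y ⟨hy, h2⟩ (by omega) hRxy

/-- A multiset in a finite poset is determined by how many of its elements lie above each point: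
multiplicities are recovered by downward induction. -/
theorem eq_of_countP {α : Type*} [PartialOrder α] [Fintype α] [DecidableEq α]
    [DecidableLE α] (t t' : Multiset α)
    (H : ∀ a, t.countP (a ≤ ·) = t'.countP (a ≤ ·)) : t = t' := by
  classical
  have key : ∀ (t : Multiset α) a, t.countP (a ≤ ·) =
      t.count a + ∑ y with a < y, t.count y := by
    intro t a
    induction t using Multiset.induction with
    | empty => simp
    | cons x t ih =>
      simp only [Multiset.countP_cons, Multiset.count_cons, ih, Finset.sum_add_distrib,
        Finset.sum_ite_eq', Finset.mem_filter, Finset.mem_univ, true_and]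
      by_cases h : a = x
      · subst h; simp; ring
      · simp [le_iff_lt_or_eq, h]; ring
  ext a
  induction a using WellFoundedGT.induction with
  | ind a ih =>
    have := H a
    rw [key, key, Finset.sum_congr rfl (fun y hy => ih y (by simpa using hy))] at this
    omega

/-! ### Cells, weights and standard multisets -/

/-- A position in an `h × k` matrix, ordered by the product order. A monomial in the entries of the
generic matrix is encoded as a multiset of cells. -/
abbrev Cell (h k : ℕ) := Fin h × Fin k

/-- The total, over all positions `a`, of the number of cells of `t` that are `≥ a`. -/
def weight {h k : ℕ} (t : Multiset (Cell h k)) : ℕ := ∑ a : Cell h k, t.countP (a ≤ ·)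

theorem weight_eq {h k : ℕ} (t : Multiset (Cell h k)) :
    weight t = (t.map fun x => ((x.1 : ℕ) + 1) * ((x.2 : ℕ) + 1)).sum := by
  induction t using Multiset.induction with
  | empty => simp [weight]
  | cons x t ih =>
    have hx : (Finset.univ.filter (· ≤ x)).card = ((x.1 : ℕ) + 1) * ((x.2 : ℕ) + 1) := by
      rw [← Fin.card_Iic, ← Fin.card_Iic, ← Finset.card_Iic_prod]
      congr 1
      ext a
      simp
    rw [Multiset.map_cons, Multiset.sum_cons, ← ih, ← hx, Finset.card_filter, add_comm]
    simp [weight, Multiset.countP_cons, Finset.sum_add_distrib]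

theorem weight_le {h k : ℕ} (t : Multiset (Cell h k)) : weight t ≤ t.card * (h * k) := by
  rw [weight_eq, ← smul_eq_mul, ← Multiset.card_map (fun x : Cell h k => ((x.1 : ℕ) + 1) * ((x.2 : ℕ) + 1))]
  refine Multiset.sum_le_card_nsmul _ _ fun y hy => ?_
  obtain ⟨x, -, rfl⟩ := Multiset.mem_map.1 hy
  exact Nat.mul_le_mul x.1.2 x.2.2

/-- A multiset of cells is standard if it does not contain `d + 1` cells with strictly increasing
rows and strictly decreasing columns, i.e. the antidiagonal of a `(d + 1) × (d + 1)` minor. -/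
def IsStandard {h k : ℕ} (d : ℕ) (t : Multiset (Cell h k)) : Prop :=
  ¬ ∃ z : Fin (d + 1) → Cell h k,
    (∀ i j, i < j → (z i).1 < (z j).1 ∧ (z j).2 < (z i).2) ∧ ∀ i, z i ∈ t

/-- The cells of a standard multiset can be coloured with `d` colours, each colour class being a
chain for the product order. -/
theorem IsStandard.exists_coloring {h k d : ℕ} {t : Multiset (Cell h k)} (ht : IsStandard d t) :
    ∃ s : Multiset (Cell h k × Fin d), s.map Prod.fst = t ∧
      ∀ z ∈ s, ∀ w ∈ s, z.2 = w.2 → z.1 ≤ w.1 ∨ w.1 ≤ z.1 := by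
  rcases mirsky (fun x y : Cell h k => x.1 < y.1 ∧ y.2 < x.2)
    (fun x y z h1 h2 => ⟨h1.1.trans h2.1, h2.2.trans h1.2⟩) d {x | x ∈ t} with hz | ⟨f, hf, hfR⟩
  · exact absurd hz ht
  rcases Nat.eq_zero_or_pos d with rfl | hd
  · refine ⟨0, ?_, by simp⟩
    rw [Multiset.map_zero, eq_comm, Multiset.eq_zero_iff_forall_notMem]
    intro x hx
    exact absurd (hf x hx) (Nat.not_lt_zero _)
  · refine ⟨t.map fun x => (x, ⟨f x % d, Nat.mod_lt _ hd⟩), by simp, ?_⟩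
    intro z hz w hw hzw
    obtain ⟨x, hx, rfl⟩ := Multiset.mem_map.1 hz
    obtain ⟨y, hy, rfl⟩ := Multiset.mem_map.1 hw
    have hxy : f x = f y := by
      simpa [Nat.mod_eq_of_lt (hf x hx), Nat.mod_eq_of_lt (hf y hy)] using hzw
    have h1 := hfR x hx y hy hxy
    have h2 := hfR y hy x hx hxy.symm
    simp only [Prod.le_def]
    grind

/-! ### Coloured cells and their row and column contents -/

/-- Index type of the variables of a pair of generic matrices `B` (`h × d`) and `C` (`d × k`). -/
abbrev ColVar (h k d : ℕ) := (Fin h × Fin d) ⊕ (Fin d × Fin k)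

/-- The exponent of the term `B p i * C i q` attached to the cell `(p, q)` with colour `i`. -/
noncomputable def cellExp {h k d : ℕ} (z : Cell h k × Fin d) : ColVar h k d →₀ ℕ :=
  Finsupp.single (Sum.inl (z.1.1, z.2)) 1 + Finsupp.single (Sum.inr (z.2, z.1.2)) 1

/-- The exponent of the monomial in `B` and `C` attached to a multiset of coloured cells. It records
the multisets of rows and of columns of each colour class. -/
noncomputable def content {h k d : ℕ} (s : Multiset (Cell h k × Fin d)) : ColVar h k d →₀ ℕ :=
  (s.map cellExp).sum

theorem countP_row {h k d : ℕ} (s : Multiset (Cell h k × Fin d)) (a : Fin h) (i : Fin d) :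
    s.countP (fun z => z.2 = i ∧ a ≤ z.1.1) =
      ∑ p : Fin h, if a ≤ p then content s (Sum.inl (p, i)) else 0 := by
  induction s using Multiset.induction with
  | empty => simp [content]
  | cons z s ih =>
    have : content (z ::ₘ s) = cellExp z + content s := by simp [content]
    rw [this, Multiset.countP_cons, ih]
    simp only [Finsupp.add_apply, cellExp, ← Finset.sum_filter, Finset.sum_add_distrib]
    rw [add_comm]
    congr 1
    by_cases h1 : z.2 = i <;> simp [Finsupp.single_apply, h1]

theorem countP_col {h k d : ℕ} (s : Multiset (Cell h k × Fin d)) (a : Fin k) (i : Fin d) :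
    s.countP (fun z => z.2 = i ∧ a ≤ z.1.2) =
      ∑ q : Fin k, if a ≤ q then content s (Sum.inr (i, q)) else 0 := by
  induction s using Multiset.induction with
  | empty => simp [content]
  | cons z s ih =>
    have : content (z ::ₘ s) = cellExp z + content s := by simp [content]
    rw [this, Multiset.countP_cons, ih]
    simp only [Finsupp.add_apply, cellExp, ← Finset.sum_filter, Finset.sum_add_distrib]
    rw [add_comm]
    congr 1
    by_cases h1 : z.2 = i <;> simp [Finsupp.single_apply, h1]

theorem countP_colors {h k d : ℕ} (s : Multiset (Cell h k × Fin d)) (a : Cell h k) :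
    (s.map Prod.fst).countP (a ≤ ·) = ∑ i, s.countP (fun z => z.2 = i ∧ a ≤ z.1) := by
  induction s using Multiset.induction with
  | empty => simp
  | cons z s ih =>
    simp only [Multiset.map_cons, Multiset.countP_cons, ih, Finset.sum_add_distrib]
    congr 1
    by_cases h : a ≤ z.1 <;> simp [h]

/-- Among coloured multisets of cells with a given content, one whose colour classes are chains has
the largest number of cells above each position. -/
theorem countP_le_of_content_eq {h k d : ℕ} {s s' : Multiset (Cell h k × Fin d)}
    (hs : ∀ z ∈ s, ∀ w ∈ s, z.2 = w.2 → z.1 ≤ w.1 ∨ w.1 ≤ z.1)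
    (hc : content s' = content s) (a : Cell h k) :
    (s'.map Prod.fst).countP (a ≤ ·) ≤ (s.map Prod.fst).countP (a ≤ ·) := by
  rw [countP_colors, countP_colors]
  refine Finset.sum_le_sum fun i _ => ?_
  -- The sets of cells of colour `i` in rows `≥ a.1` and in columns `≥ a.2` are upper sets of a
  -- chain, so one contains the other.
  by_cases hR : ∀ z ∈ s, z.2 = i → a.1 ≤ z.1.1 → a.2 ≤ z.1.2
  · calc s'.countP (fun z => z.2 = i ∧ a ≤ z.1)
        ≤ s'.countP (fun z => z.2 = i ∧ a.1 ≤ z.1.1) := by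
          simp only [Multiset.countP_eq_card_filter]
          exact Multiset.card_le_card
            (Multiset.monotone_filter_right _ fun z hz => ⟨hz.1, hz.2.1⟩)
      _ = s.countP (fun z => z.2 = i ∧ a.1 ≤ z.1.1) := by rw [countP_row, countP_row, hc]
      _ = s.countP (fun z => z.2 = i ∧ a ≤ z.1) := by
          refine Multiset.countP_congr rfl fun z hz => ?_
          simp only [Prod.le_def]
          grind
  · push Not at hR
    obtain ⟨w, hw, hwi, hw1, hw2⟩ := hR
    have hC : ∀ z ∈ s, z.2 = i → a.2 ≤ z.1.2 → a.1 ≤ z.1.1 := by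
      intro z hz hzi hz2
      rcases hs z hz w hw (hzi.trans hwi.symm) with hzw | hwz
      · exact absurd (hz2.trans hzw.2) (not_le.2 hw2)
      · exact hw1.trans hwz.1
    calc s'.countP (fun z => z.2 = i ∧ a ≤ z.1)
        ≤ s'.countP (fun z => z.2 = i ∧ a.2 ≤ z.1.2) := by
          simp only [Multiset.countP_eq_card_filter]
          exact Multiset.card_le_card
            (Multiset.monotone_filter_right _ fun z hz => ⟨hz.1, hz.2.2⟩)
      _ = s.countP (fun z => z.2 = i ∧ a.2 ≤ z.1.2) := by rw [countP_col, countP_col, hc]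
      _ = s.countP (fun z => z.2 = i ∧ a ≤ z.1) := by
          refine Multiset.countP_congr rfl fun z hz => ?_
          simp only [Prod.le_def]
          grind

/-! ### Independence of standard monomials on products of matrices -/

/-- The image of the monomial `t` under the substitution `X = B * C`. -/
noncomputable def genProd {h k : ℕ} (d : ℕ) (t : Multiset (Cell h k)) :
    MvPolynomial (ColVar h k d) ℚ :=
  (t.map fun x => ∑ i : Fin d, monomial (cellExp (x, i)) (1 : ℚ)).prod

theorem coeff_genProd_cons {h k d : ℕ} (x : Cell h k) (t : Multiset (Cell h k))
    (u : ColVar h k d →₀ ℕ) :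
    coeff u (genProd d (x ::ₘ t)) = ∑ i : Fin d,
      if cellExp (x, i) ≤ u then coeff (u - cellExp (x, i)) (genProd d t) else 0 := by
  rw [genProd, Multiset.map_cons, Multiset.prod_cons, mul_comm, Finset.mul_sum, coeff_sum]
  refine Finset.sum_congr rfl fun i _ => ?_
  rw [coeff_mul_monomial', mul_one]
  rfl

theorem coeff_genProd_nonneg {h k d : ℕ} (t : Multiset (Cell h k)) (u : ColVar h k d →₀ ℕ) :
    0 ≤ coeff u (genProd d t) := by
  induction t using Multiset.induction generalizing u with
  | empty =>
    rw [genProd, Multiset.map_zero, Multiset.prod_zero, coeff_one]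
    split_ifs <;> simp
  | cons x t ih =>
    rw [coeff_genProd_cons]
    refine Finset.sum_nonneg fun i _ => ?_
    split_ifs
    · exact ih _
    · exact le_rfl

theorem exists_of_coeff_genProd_ne_zero {h k d : ℕ} (t : Multiset (Cell h k))
    (u : ColVar h k d →₀ ℕ) (hu : coeff u (genProd d t) ≠ 0) :
    ∃ s : Multiset (Cell h k × Fin d), s.map Prod.fst = t ∧ content s = u := by
  induction t using Multiset.induction generalizing u with
  | empty =>
    rw [genProd, Multiset.map_zero, Multiset.prod_zero, coeff_one] at hu
    refine ⟨0, by simp, ?_⟩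
    simpa [content] using hu
  | cons x t ih =>
    rw [coeff_genProd_cons] at hu
    obtain ⟨i, -, hi⟩ := Finset.exists_ne_zero_of_sum_ne_zero hu
    split_ifs at hi with hle
    · obtain ⟨s, rfl, hs⟩ := ih _ hi
      refine ⟨(x, i) ::ₘ s, by simp, ?_⟩
      rw [content, Multiset.map_cons, Multiset.sum_cons]
      change _ + content s = u
      rw [hs, add_tsub_cancel_of_le hle]
    · exact absurd rfl hi

theorem coeff_genProd_pos {h k d : ℕ} (s : Multiset (Cell h k × Fin d)) :
    0 < coeff (content s) (genProd d (s.map Prod.fst)) := by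
  induction s using Multiset.induction with
  | empty => simp [genProd, content]
  | cons z s ih =>
    have hc : content (z ::ₘ s) = cellExp z + content s := by simp [content]
    rw [Multiset.map_cons, coeff_genProd_cons]
    refine Finset.sum_pos' (fun i _ => ?_) ⟨z.2, Finset.mem_univ _, ?_⟩
    · split_ifs
      · exact coeff_genProd_nonneg _ _
      · exact le_rfl
    · rw [hc, if_pos (self_le_add_right _ _), add_tsub_cancel_left]
      exact ih

/-- The images of the standard monomials under `X = B * C` are linearly independent. -/
theorem eq_zero_of_sum_genProd_eq_zero {h k d : ℕ} (l : Multiset (Cell h k) →₀ ℚ)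
    (hl : ∀ t ∈ l.support, IsStandard d t) (h0 : (l.sum fun t c => c • genProd d t) = 0) :
    l = 0 := by
  by_contra hne
  -- In the support of `l`, a `t` of least weight is isolated by the content of its chain colouring.
  obtain ⟨t, ht, hmin⟩ := l.support.exists_min_image weight (Finsupp.support_nonempty_iff.2 hne)
  obtain ⟨s, rfl, hs⟩ := (hl t ht).exists_coloring
  have hco := congrArg (coeff (content s)) h0
  rw [Finsupp.sum, coeff_sum, Finset.sum_eq_single_of_mem _ ht, coeff_smul, coeff_zero,
    smul_eq_mul] at hco
  · exact mul_ne_zero (Finsupp.mem_support_iff.1 ht) (coeff_genProd_pos s).ne' hco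
  · intro t' ht' hne'
    by_contra hcoeff
    rw [coeff_smul] at hcoeff
    obtain ⟨s', rfl, hs'⟩ := exists_of_coeff_genProd_ne_zero t' _ (right_ne_zero_of_smul hcoeff)
    have hle := countP_le_of_content_eq hs hs'
    refine hne' (eq_of_countP _ _ fun a => ?_)
    refine (Finset.sum_eq_sum_iff_of_le fun a _ => hle a).1 ?_ a (Finset.mem_univ a)
    exact le_antisymm (Finset.sum_le_sum fun a _ => hle a) (hmin _ ht')

/-! ### Reduction to standard monomials modulo the minors -/

/-- The monomial in the entries of the generic matrix given by a multiset of cells. -/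
noncomputable def cellMonomial {h k : ℕ} (t : Multiset (Cell h k)) : MvPolynomial (Cell h k) ℚ :=
  (t.map X).prod

/-- The ideal generated by the `(d + 1) × (d + 1)` minors of the generic `h × k` matrix. -/
noncomputable def minorIdeal (h k d : ℕ) : Ideal (MvPolynomial (Fin h × Fin k) ℚ) :=
  Ideal.span {P : MvPolynomial (Fin h × Fin k) ℚ |
        ∃ (r : Fin (d + 1) ↪ Fin h) (c : Fin (d + 1) ↪ Fin k),
          P = ((Matrix.of fun p q => MvPolynomial.X (p, q) :
            Matrix (Fin h) (Fin k) (MvPolynomial (Fin h × Fin k) ℚ)).submatrix r c).det}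

/-- The antidiagonal term of a minor has strictly smaller weight than every other term. -/
theorem sum_lt_sum_perm {n h k : ℕ} (r : Fin n → Fin h) (c : Fin n → Fin k) (hr : StrictMono r)
    (hc : StrictAnti c) (σ : Equiv.Perm (Fin n)) (hσ : σ ≠ 1) :
    ∑ i, ((r i : ℕ) + 1) * ((c i : ℕ) + 1) < ∑ i, ((r (σ i) : ℕ) + 1) * ((c i : ℕ) + 1) := by
  have hav : Antivary (fun i => (r i : ℕ) + 1) (fun i => (c i : ℕ) + 1) := by
    intro i j hij
    have : j < i := hc.lt_iff_gt.1 (by simpa using hij)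
    simpa using hr.monotone this.le
  refine (hav.sum_mul_lt_sum_comp_perm_mul_iff (σ := σ)).2 fun hav' => hσ ?_
  have hm : StrictMono σ := by
    refine Monotone.strictMono_of_injective (fun i j hij => ?_) σ.injective
    rcases hij.eq_or_lt with rfl | hij
    · exact le_rfl
    · have := hav' (i := j) (j := i) (by simpa using hc hij)
      simpa [hr.le_iff_le] using this
  ext i
  have := congrFun (hm.range_inj (g := id) strictMono_id |>.1 (by simp)) i
  simp [this]

/-- Modulo the minors, every monomial is a combination of standard ones. -/
theorem cellMonomial_mem {h k d : ℕ} (t : Multiset (Cell h k)) :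
    cellMonomial t ∈ (minorIdeal h k d).restrictScalars ℚ ⊔
      Submodule.span ℚ (cellMonomial '' {t : Multiset (Cell h k) | IsStandard d t}) := by
  induction hn : t.card * (h * k) - weight t using Nat.strong_induction_on generalizing t with
  | _ n ih =>
  by_cases hstd : IsStandard d t
  · exact Submodule.mem_sup_right (Submodule.subset_span ⟨t, hstd, rfl⟩)
  obtain ⟨z, hz, hzt⟩ := not_not.1 hstd
  have hr : StrictMono fun i => (z i).1 := fun i j hij => (hz i j hij).1
  have hc : StrictAnti fun i => (z i).2 := fun i j hij => (hz i j hij).2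
  -- `D σ` lists the cells of the term of `σ` in the minor on the rows and columns of `z`; the term
  -- `D 1` is its antidiagonal, since the columns are listed in decreasing order.
  let D : Equiv.Perm (Fin (d + 1)) → Multiset (Cell h k) := fun σ =>
    Finset.univ.val.map fun i => ((z (σ i)).1, (z i).2)
  obtain ⟨t₀, ht₀⟩ : ∃ t₀, t = D 1 + t₀ := by
    refine Multiset.le_iff_exists_add.1 ((Multiset.le_iff_subset ?_).2 ?_)
    · refine Finset.univ.nodup.map fun i j hij => hr.injective ?_
      simpa using congrArg Prod.fst hij
    · intro x hx
      obtain ⟨i, -, rfl⟩ := Multiset.mem_map.1 hx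
      exact hzt i
  have hmon : ∀ σ, cellMonomial (D σ + t₀) =
      (∏ i, X ((z (σ i)).1, (z i).2)) * cellMonomial t₀ := by
    intro σ
    simp only [cellMonomial, D, Multiset.map_add, Multiset.prod_add, Multiset.map_map]
    rfl
  have hdet : (∑ σ : Equiv.Perm (Fin (d + 1)), Equiv.Perm.sign σ • cellMonomial (D σ + t₀)) ∈
      minorIdeal h k d := by
    have : (∑ σ : Equiv.Perm (Fin (d + 1)), Equiv.Perm.sign σ • cellMonomial (D σ + t₀)) =
      ((Matrix.of fun p q => X (p, q) :
            Matrix (Fin h) (Fin k) (MvPolynomial (Fin h × Fin k) ℚ)).submatrix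
            (⟨_, hr.injective⟩ : Fin (d + 1) ↪ Fin h)
            (⟨_, hc.injective⟩ : Fin (d + 1) ↪ Fin k)).det * cellMonomial t₀ := by
      rw [Matrix.det_apply, Finset.sum_mul]
      refine Finset.sum_congr rfl fun σ _ => ?_
      rw [hmon, smul_mul_assoc]
      rfl
    rw [this]
    exact Ideal.mul_mem_right _ _ (Ideal.subset_span ⟨_, _, rfl⟩)
  rw [← Finset.add_sum_erase _ _ (Finset.mem_univ 1), Equiv.Perm.sign_one, one_smul, ← ht₀]
    at hdet
  rw [← add_sub_cancel_right (cellMonomial t)]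
  refine Submodule.sub_mem _ (Submodule.mem_sup_left hdet) (Submodule.sum_mem _ fun σ hσ => ?_)
  have hσ1 : σ ≠ 1 := (Finset.mem_erase.1 hσ).1
  have hmem := ih _ ?_ (D σ + t₀) rfl
  · rcases Int.units_eq_one_or (Equiv.Perm.sign σ) with hs | hs
    · simpa [hs] using hmem
    · simpa [hs] using hmem
  · have hcard : (D σ + t₀).card = t.card := by simp [ht₀, D]
    have hlt : weight t < weight (D σ + t₀) := by
      have := sum_lt_sum_perm _ _ hr hc σ hσ1
      rw [ht₀, weight_eq, weight_eq]
      simp only [D, Multiset.map_add, Multiset.sum_add, Multiset.map_map, add_lt_add_iff_right]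
      exact this
    have := weight_le (D σ + t₀)
    rw [hcard] at this ⊢
    omega

theorem mem_sup_standard {h k d : ℕ} (P : MvPolynomial (Fin h × Fin k) ℚ) :
    P ∈ (minorIdeal h k d).restrictScalars ℚ ⊔
      Submodule.span ℚ (cellMonomial '' {t : Multiset (Cell h k) | IsStandard d t}) := by
  rw [P.as_sum]
  refine Submodule.sum_mem _ fun m _ => ?_
  have : monomial m (coeff m P) = coeff m P • cellMonomial m.toMultiset := by
    rw [monomial_eq, cellMonomial, Finsupp.toMultiset_map, Finsupp.prod_toMultiset,
      Finsupp.prod_mapDomain_index (by simp) (by simp [pow_add]), smul_eq_C_mul]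
  rw [this]
  exact Submodule.smul_mem _ _ (cellMonomial_mem _)

/-! ### The vanishing ideal of the matrices of rank at most `d` -/

theorem eval_minor_eq_zero {h k d : ℕ} (A : Matrix (Fin h) (Fin k) ℚ) (hA : A.rank ≤ d)
    {P : MvPolynomial (Fin h × Fin k) ℚ} (hP : P ∈ minorIdeal h k d) :
    eval (fun p : Fin h × Fin k => A p.1 p.2) P = 0 := by
  suffices minorIdeal h k d ≤ RingHom.ker (eval fun p : Fin h × Fin k => A p.1 p.2) from this hP
  refine Ideal.span_le.2 ?_
  rintro _ ⟨r, c, rfl⟩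
  rw [SetLike.mem_coe, RingHom.mem_ker, RingHom.map_det]
  have : (eval fun p : Fin h × Fin k => A p.1 p.2).mapMatrix
      ((Matrix.of fun p q => X (p, q) :
        Matrix (Fin h) (Fin k) (MvPolynomial (Fin h × Fin k) ℚ)).submatrix r c) =
      A.submatrix r c := by
    ext i j
    simp
  rw [this]
  by_contra hdet
  have h1 := Matrix.rank_of_isUnit _ ((Matrix.isUnit_iff_isUnit_det _).2 (isUnit_iff_ne_zero.2 hdet))
  have h2 := A.rank_submatrix_le r c
  rw [h1, Fintype.card_fin] at h2
  omega

/-- The substitution `X = B * C` with generic `B` and `C` of inner dimension `d`. -/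
noncomputable def genericProduct (h k d : ℕ) :
    MvPolynomial (Fin h × Fin k) ℚ →ₐ[ℚ] MvPolynomial (ColVar h k d) ℚ :=
  aeval fun x => ∑ i : Fin d, monomial (cellExp (x, i)) (1 : ℚ)

theorem genericProduct_cellMonomial {h k d : ℕ} (t : Multiset (Cell h k)) :
    genericProduct h k d (cellMonomial t) = genProd d t := by
  rw [cellMonomial, genProd, map_multiset_prod, Multiset.map_map]
  congr 1
  refine Multiset.map_congr rfl fun x _ => ?_
  simp [genericProduct]

theorem genericProduct_eq_zero {h k d : ℕ} {P : MvPolynomial (Fin h × Fin k) ℚ}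
    (hP : ∀ A : Matrix (Fin h) (Fin k) ℚ, A.rank ≤ d →
        eval (fun p : Fin h × Fin k => A p.1 p.2) P = 0) : genericProduct h k d P = 0 := by
  refine MvPolynomial.funext fun v => ?_
  rw [map_zero]
  let B : Matrix (Fin h) (Fin d) ℚ := Matrix.of fun p i => v (Sum.inl (p, i))
  let C : Matrix (Fin d) (Fin k) ℚ := Matrix.of fun i q => v (Sum.inr (i, q))
  rw [← hP (B * C) ((Matrix.rank_mul_le_left B C).trans B.rank_le_width), genericProduct]
  change eval v (eval₂Hom _ _ P) = _
  rw [← RingHom.comp_apply]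
  refine RingHom.congr_fun (MvPolynomial.ringHom_ext (fun c => by simp) fun x => ?_) P
  simp [Matrix.mul_apply, B, C, cellExp, monomial_add_single, eval_monomial]

theorem mem_minorIdeal {h k d : ℕ} {P : MvPolynomial (Fin h × Fin k) ℚ}
    (hP : ∀ A : Matrix (Fin h) (Fin k) ℚ, A.rank ≤ d →
        eval (fun p : Fin h × Fin k => A p.1 p.2) P = 0) : P ∈ minorIdeal h k d := by
  obtain ⟨Q, hQ, S, hS, rfl⟩ := Submodule.mem_sup.1 (mem_sup_standard (d := d) P)
  have hS0 : genericProduct h k d S = 0 := genericProduct_eq_zero fun A hA => by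
    have := hP A hA
    rwa [map_add, eval_minor_eq_zero A hA hQ, zero_add] at this
  obtain ⟨l, hl, rfl⟩ := (Finsupp.mem_span_image_iff_linearCombination ℚ).1 hS
  have hl0 : l = 0 := by
    refine eq_zero_of_sum_genProd_eq_zero l (fun t ht => hl ht) ?_
    rw [← hS0, Finsupp.linearCombination_apply, map_finsuppSum]
    simp [genericProduct_cellMonomial]
  rw [hl0, map_zero, add_zero]
  exact hQ

/-- **Second fundamental theorem for determinantal ideals.**  Let `I` be the ideal of polynomials
in the entries of a generic `h × k` matrix vanishing on all matrices of rank at most `d`.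
Then (a) `I` is nonzero iff `d < min h k`, and (b) if `d < min h k`, `I` is generated by the
determinants of all `(d+1) × (d+1)` minors of the generic matrix. -/
theorem SFT_determinantal (h k d : ℕ) (hh : 1 ≤ h) (hk : 1 ≤ k)
    (I : Ideal (MvPolynomial (Fin h × Fin k) ℚ))
    (hI : ∀ P : MvPolynomial (Fin h × Fin k) ℚ, P ∈ I ↔
      ∀ A : Matrix (Fin h) (Fin k) ℚ, A.rank ≤ d →
        MvPolynomial.eval (fun p : Fin h × Fin k => A p.1 p.2) P = 0) :
    (I ≠ ⊥ ↔ d < min h k) ∧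
    (d < min h k → I = Ideal.span
      {P : MvPolynomial (Fin h × Fin k) ℚ |
        ∃ (r : Fin (d + 1) ↪ Fin h) (c : Fin (d + 1) ↪ Fin k),
          P = ((Matrix.of fun p q => MvPolynomial.X (p, q) :
            Matrix (Fin h) (Fin k) (MvPolynomial (Fin h × Fin k) ℚ)).submatrix r c).det}) := by
  have hIJ : I = minorIdeal h k d := by
    ext P
    rw [hI]
    exact ⟨mem_minorIdeal, fun hP A hA => eval_minor_eq_zero A hA hP⟩
  refine ⟨⟨fun hne => ?_, fun hd => ?_⟩, fun _ => hIJ⟩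
  · by_contra hd
    refine hne ((Submodule.eq_bot_iff _).2 fun P hP => MvPolynomial.funext fun v => ?_)
    rw [map_zero]
    refine (hI P).1 hP (Matrix.of fun p q => v (p, q)) ?_
    rcases min_le_iff.1 (not_lt.1 hd) with hd | hd
    · exact (Matrix.rank_le_height _).trans hd
    · exact (Matrix.rank_le_width _).trans hd
  · rw [lt_min_iff] at hd
    let r : Fin (d + 1) ↪ Fin h := (Fin.castLEEmb hd.1)
    let c : Fin (d + 1) ↪ Fin k := (Fin.castLEEmb hd.2)
    intro hbot
    have hmem : ((Matrix.of fun p q => X (p, q) :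
        Matrix (Fin h) (Fin k) (MvPolynomial (Fin h × Fin k) ℚ)).submatrix r c).det ∈ I := by
      rw [hIJ]
      exact Ideal.subset_span ⟨r, c, rfl⟩
    rw [hbot, Ideal.mem_bot] at hmem
    have := congrArg (eval fun p : Fin h × Fin k => if (p.1 : ℕ) = p.2 then (1 : ℚ) else 0) hmem
    rw [RingHom.map_det, map_zero] at this
    refine one_ne_zero (this.symm.trans ?_).symm
    rw [← Matrix.det_one (n := Fin (d + 1))]
    congr 1
    ext i j
    simp [r, c, Matrix.one_apply, Fin.ext_iff]
end

section
/- First fundamental theorem for matrix invariants: Let d, k ≥ 1 and let P ∈ MvPolynomial (Fin k × Fin d × Fin d) ℚ, viewed as a polynomial function of a k-tuple of d×d matrices (variable (i,a,b) = (a,b) entry of the i-th matrix). Suppose P is invariant under simultaneous conjugation: for every invertible g : Matrix (Fin d) (Fin d) ℚ and every x : Fin k → Matrix (Fin d) (Fin d) ℚ, evaluating P at the entries of (fun i => g * x i * g⁻¹) equals evaluating P at the entries of x. Then P lies in the ℚ-subalgebra of MvPolynomial (Fin k × Fin d × Fin d) ℚ generated by the traces of monomials in the generic matrices: the polynomials Matrix.trace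 (List.prod (w.map ξ)) for all lists w : List (Fin k), where ξ i : Matrix (Fin d) (Fin d) (MvPolynomial (Fin k × Fin d × Fin d) ℚ) is the i-th generic matrix with (a,b) entry the variable X(i,a,b). -/
/-!
The proof goes through Schur–Weyl duality. Conjugation preserves degree, so `P` may be taken
homogeneous of degree `n`. Over `ℚ`, such a form is the same as a symmetric tensor `c` with indices
in `Fin k × Fin d × Fin d` (`exists_tensorPoly_eq`, `eq_zero_of_tensorPoly_eq_zero`), and invariance
of `P` becomes invariance of `c`. For each choice `u : Fin n → Fin k` of letters, the slice of `c`
at `u` is then an endomorphism of `(ℚ^d)^{⊗n}` commuting with `g^{⊗n}` for all invertible `g`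
(`commute_of_conj_eq`).

An endomorphism commuting with all `g^{⊗n}` commutes with the whole commutant of the symmetric
group `S_n`, because invertible matrices are Zariski dense (`commute_of_commute_tensorPow`). By the
double commutant theorem for `S_n` (`mem_span_of_commute_commutant`) it is a combination of
permutations of the tensor factors. Therefore `P` is a combination of the polynomials
`∑ a, ∏ t, X (u t, a t, a (σ t))`, and each of these is a product, over the cycles of `σ`, of traces
of words in the generic matrices (`sum_prod_mem`).
-/

namespace MatrixFFT

open MvPolynomial
open scoped Matrix

/-! ### The double commutant theorem and traces along permutations -/

/-- Double commutant theorem for a representation `ρ` of a finite group. Averaging a linear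
projection onto `A = span ρ(G)` gives a projection `π` onto `A` with `π (ρ g * X) = ρ g * π X`.
Acting on columns, `π` is made of blocks lying in the commutant of `ρ`, so `π` also commutes with
left multiplication by `C`; hence `C = C * π 1 = π C ∈ A`. -/
theorem mem_span_of_commute_commutant {G I : Type*} [Group G] [Fintype G] [Fintype I]
    [DecidableEq I] (ρ : G →* Matrix I I ℚ) (C : Matrix I I ℚ)
    (hC : ∀ M : Matrix I I ℚ, (∀ g, M * ρ g = ρ g * M) → C * M = M * C) :
    C ∈ Submodule.span ℚ (Set.range ρ) := by
  set A := Submodule.span ℚ (Set.range ρ) with hA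
  have hmul : ∀ g, ∀ X ∈ A, ρ g * X ∈ A := by
    intro g X hX
    induction hX using Submodule.span_induction with
    | mem x hx =>
      obtain ⟨h, rfl⟩ := hx
      rw [← map_mul]
      exact Submodule.subset_span ⟨_, rfl⟩
    | zero => simp
    | add x y _ _ hx hy => rw [mul_add]; exact A.add_mem hx hy
    | smul r x _ hx => rw [mul_smul_comm]; exact A.smul_mem r hx
  obtain ⟨p, hp⟩ := LinearMap.exists_leftInverse_of_injective A.subtype A.ker_subtype
  have hp' : ∀ X (hX : X ∈ A), (p X : Matrix I I ℚ) = X := fun X hX => by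
    have := LinearMap.congr_fun hp ⟨X, hX⟩
    simpa using congrArg Subtype.val this
  let π : Matrix I I ℚ →ₗ[ℚ] Matrix I I ℚ := (Fintype.card G : ℚ)⁻¹ •
    ∑ g, LinearMap.mulLeft ℚ (ρ g⁻¹) ∘ₗ A.subtype ∘ₗ p ∘ₗ LinearMap.mulLeft ℚ (ρ g)
  have hπ : ∀ X, π X = (Fintype.card G : ℚ)⁻¹ • ∑ g, ρ g⁻¹ * (p (ρ g * X) : Matrix I I ℚ) := by
    intro X
    simp [π, LinearMap.sum_apply]
  have hπA : ∀ X, π X ∈ A := by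
    intro X
    rw [hπ]
    exact A.smul_mem _ (A.sum_mem fun g _ => hmul _ _ (p _).2)
  have hπ1 : π 1 = 1 := by
    have : ∀ g, ρ g⁻¹ * (p (ρ g * 1) : Matrix I I ℚ) = 1 := by
      intro g
      rw [mul_one, hp' _ (Submodule.subset_span ⟨g, rfl⟩), ← map_mul]
      simp
    have h0 : (Fintype.card G : ℚ) ≠ 0 := by exact_mod_cast Fintype.card_ne_zero
    rw [hπ, Finset.sum_congr rfl fun g _ => this g, Finset.sum_const, Finset.card_univ,
      ← Nat.cast_smul_eq_nsmul ℚ, smul_smul, inv_mul_cancel₀ h0, one_smul]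
  have hπeq : ∀ h X, π (ρ h * X) = ρ h * π X := by
    intro h X
    rw [hπ, hπ, mul_smul_comm, Finset.mul_sum]
    congr 1
    refine Fintype.sum_equiv (Equiv.mulRight h) _ _ fun g => ?_
    simp [← mul_assoc, ← map_mul]
  have hexp : ∀ X a l, π X a l = ∑ j, ∑ b, π (Matrix.single b j 1) a l * X b j := by
    intro X a l
    conv_lhs => rw [Matrix.matrix_eq_sum_single X]
    rw [Finset.sum_comm]
    simp only [map_sum, Matrix.sum_apply]
    refine Finset.sum_congr rfl fun j _ => Finset.sum_congr rfl fun b _ => ?_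
    have : Matrix.single b j (X b j) = X b j • Matrix.single b j (1 : ℚ) := by
      simp [Matrix.smul_single]
    rw [this, map_smul, Matrix.smul_apply, smul_eq_mul, mul_comm]
  -- `M j l` is the block of `π` from column `j` to column `l`.
  let M : I → I → Matrix I I ℚ := fun j l => Matrix.of fun a b => π (Matrix.single b j 1) a l
  have hexp' : ∀ X a l, π X a l = ∑ j, (M j l * X) a j := by
    intro X a l
    rw [hexp]
    rfl
  have hM : ∀ j l g, M j l * ρ g = ρ g * M j l := by
    intro j l g
    ext a b
    have h1 : (ρ g * M j l) a b = π (ρ g * Matrix.single b j 1) a l := by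
      rw [hπeq]
      rfl
    rw [h1, hexp, Finset.sum_eq_single j]
    · simp [Matrix.mul_apply, M, Matrix.single_apply]
    · intro j' _ hj'
      simp [hj']
    · simp
  have key : π C = C := by
    ext a l
    rw [hexp']
    calc ∑ j, (M j l * C) a j = ∑ j, ∑ e, C a e * M j l e j := by
          refine Finset.sum_congr rfl fun j _ => ?_
          rw [← hC _ (hM j l), Matrix.mul_apply]
      _ = ∑ e, C a e * ∑ j, M j l e j := by
          rw [Finset.sum_comm]
          simp only [Finset.mul_sum]
      _ = (C * π 1) a l := by
          simp_rw [Matrix.mul_apply, hexp', mul_one]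
      _ = C a l := by rw [hπ1, mul_one]
  exact key ▸ hπA C

/-- The trace of `A₁ ⊗ ⋯ ⊗ A_n` composed with a permutation `σ` of the tensor factors is a product
over the cycles of `σ` of traces of products of the `A_t`. Here the `A_t` are words in the
matrices `ξ`: the induction removes the index `0`, which splits off a trace if `0` is fixed by `σ`
and otherwise multiplies the matrix at `0` onto the matrix at `σ⁻¹ 0`. -/
theorem sum_prod_mem {R ι : Type*} [CommRing R] [Algebra ℚ R] {d : ℕ}
    (ξ : ι → Matrix (Fin d) (Fin d) R) (S : Subalgebra ℚ R)
    (hS : ∀ w : List ι, Matrix.trace (w.map ξ).prod ∈ S) (n : ℕ) :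
    ∀ (σ : Equiv.Perm (Fin n)) (w : Fin n → List ι),
      ∑ i : Fin n → Fin d, ∏ t, ((w t).map ξ).prod (i t) (i (σ t)) ∈ S := by
  induction n with
  | zero => intro σ w; simp
  | succ n ih =>
    intro σ w
    obtain ⟨⟨p, τ⟩, rfl⟩ := Equiv.Perm.decomposeFin.symm.surjective σ
    rw [← (Fin.consEquiv fun _ => Fin d).sum_comp, Fintype.sum_prod_type, Finset.sum_comm]
    simp only [Fin.prod_univ_succ, Fin.consEquiv_apply, Fin.cons_zero, Fin.cons_succ,
      Equiv.Perm.decomposeFin_symm_apply_zero, Equiv.Perm.decomposeFin_symm_apply_succ]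
    refine Fin.cases ?_ (fun a => ?_) p
    · simp only [Equiv.swap_self, Equiv.refl_apply, Fin.cons_succ, Fin.cons_zero]
      simp_rw [← Finset.sum_mul, ← Finset.mul_sum]
      exact S.mul_mem (hS (w 0)) (ih τ fun t => w t.succ)
    · -- `b.succ` is the preimage of `0` under the permutation, and `a.succ` the image of `0`.
      let b := τ.symm a
      convert ih τ (Function.update (fun t => w t.succ) b (w b.succ ++ w 0)) using 2 with i
      rw [Fintype.prod_eq_mul_prod_compl b]
      have hb : τ b = a := τ.apply_symm_apply a
      simp only [Function.update_self, List.map_append, List.prod_append, Matrix.mul_apply,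
        Fin.cons_succ, hb, Finset.sum_mul]
      refine Finset.sum_congr rfl fun x _ => ?_
      rw [Fintype.prod_eq_mul_prod_compl b, hb, Equiv.swap_apply_right, Fin.cons_zero,
        mul_left_comm, mul_assoc]
      congr 2
      refine Finset.prod_congr rfl fun t ht => ?_
      have htb : t ≠ b := by simpa using ht
      have hta : τ t ≠ a := fun h => htb (τ.injective (h.trans hb.symm))
      rw [Function.update_of_ne htb, Equiv.swap_apply_of_ne_of_ne (Fin.succ_ne_zero _)
        (by simpa using hta), Fin.cons_succ]


/-! ### Symmetric tensors and homogeneous polynomials -/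

section
variable {α : Type*} {n : ℕ}

/-- The exponent of the monomial `∏ t, X (f t)`. -/
noncomputable def wt (f : Fin n → α) : α →₀ ℕ := ∑ t, Finsupp.single (f t) 1

theorem wt_comp_perm (f : Fin n → α) (σ : Equiv.Perm (Fin n)) : wt (f ∘ σ) = wt f :=
  Equiv.sum_comp σ fun t => Finsupp.single (f t) 1

theorem exists_perm_of_wt_eq {f f' : Fin n → α} (h : wt f = wt f') :
    ∃ σ : Equiv.Perm (Fin n), f' ∘ σ = f := by
  classical
  have hc : ∀ (f : Fin n → α) a, wt f a = Fintype.card {t // f t = a} := by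
    intro f a
    simp [wt, Finsupp.finsetSum_apply, Finsupp.single_apply, Fintype.card_subtype]
  have e : ∀ a, {t // f t = a} ≃ {t // f' t = a} := fun a =>
    Fintype.equivOfCardEq (by rw [← hc, ← hc, h])
  exact ⟨Equiv.ofFiberEquiv e, funext fun t => Equiv.ofFiberEquiv_map e t⟩

theorem exists_wt_eq (n : ℕ) : ∀ m : α →₀ ℕ, m.degree = n → ∃ f : Fin n → α, wt f = m := by
  classical
  induction n with
  | zero =>
    intro m hm
    refine ⟨Fin.elim0, ?_⟩
    simp only [Finsupp.degree_eq_zero_iff] at hm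
    simp [wt, hm]
  | succ n ih =>
    intro m hm
    have hne : m ≠ 0 := by rintro rfl; simp at hm
    obtain ⟨a, ha⟩ := Finsupp.ne_iff.1 hne
    have hle : Finsupp.single a 1 ≤ m := by
      simpa [Nat.one_le_iff_ne_zero] using ha
    have hm' : m = Finsupp.single a 1 + (m - Finsupp.single a 1) :=
      (add_tsub_cancel_of_le hle).symm
    obtain ⟨f, hf⟩ := ih (m - Finsupp.single a 1) (by
      rw [hm', map_add, Finsupp.degree_single] at hm
      omega)
    refine ⟨Fin.cons a f, ?_⟩
    rw [wt] at hf
    rw [wt, Fin.sum_univ_succ]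
    simp only [Fin.cons_zero, Fin.cons_succ]
    rw [hf, ← hm']

variable [Fintype α]

/-- The form of degree `n` with coefficient tensor `c`, which need not be symmetric. -/
noncomputable def tensorPoly (c : (Fin n → α) → ℚ) : MvPolynomial α ℚ :=
  ∑ f, C (c f) * ∏ t, X (f t)

theorem coeff_tensorPoly [DecidableEq α] (c : (Fin n → α) → ℚ) (m : α →₀ ℕ) :
    coeff m (tensorPoly c) = ∑ f with wt f = m, c f := by
  have h : ∀ f : Fin n → α, (∏ t, X (f t) : MvPolynomial α ℚ) = monomial (wt f) 1 := by
    intro f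
    rw [wt, monomial_sum_one]
    rfl
  simp [tensorPoly, coeff_sum, h, coeff_monomial, Finset.sum_filter]

/-- A symmetric tensor is determined by its polynomial. -/
theorem eq_zero_of_tensorPoly_eq_zero {c : (Fin n → α) → ℚ}
    (hc : ∀ f (σ : Equiv.Perm (Fin n)), c (f ∘ σ) = c f) (h : tensorPoly c = 0) (f) : c f = 0 := by
  classical
  have h1 := coeff_tensorPoly c (wt f)
  rw [h, coeff_zero, Finset.sum_congr rfl (g := fun _ => c f), Finset.sum_const] at h1
  · have h2 : ({f' | wt f' = wt f} : Finset (Fin n → α)).card ≠ 0 :=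
      Finset.card_ne_zero_of_mem (a := f) (by simp)
    simpa [h2] using h1.symm
  · intro f' hf'
    obtain ⟨σ, rfl⟩ := exists_perm_of_wt_eq (Finset.mem_filter.1 hf').2
    exact hc _ _

theorem tensorPoly_comp_perm (c : (Fin n → α) → ℚ) (σ : Equiv.Perm (Fin n)) :
    tensorPoly (fun f => c (f ∘ σ)) = tensorPoly c := by
  refine Fintype.sum_equiv (Equiv.arrowCongr σ⁻¹ (Equiv.refl α)) _ _ fun f => ?_
  have h : Equiv.arrowCongr σ⁻¹ (Equiv.refl α) f = f ∘ σ := rfl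
  rw [h]
  congr 1
  exact (Equiv.prod_comp σ fun t => X (f t)).symm

/-- A tensor with zero polynomial is orthogonal to all symmetric tensors, because its symmetrization
vanishes. -/
theorem sum_mul_eq_zero {c M : (Fin n → α) → ℚ} (h : tensorPoly c = 0)
    (hM : ∀ f (σ : Equiv.Perm (Fin n)), M (f ∘ σ) = M f) : ∑ f, c f * M f = 0 := by
  have hs : ∀ f, ∑ σ : Equiv.Perm (Fin n), c (f ∘ σ) = 0 := by
    refine eq_zero_of_tensorPoly_eq_zero
      (c := fun f => ∑ σ : Equiv.Perm (Fin n), c (f ∘ σ)) ?_ ?_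
    · intro f σ
      exact Fintype.sum_equiv (Equiv.mulLeft σ) _ _ fun τ => rfl
    · have : tensorPoly (fun f => ∑ σ : Equiv.Perm (Fin n), c (f ∘ σ)) =
          ∑ σ : Equiv.Perm (Fin n), tensorPoly fun f => c (f ∘ σ) := by
        simp only [tensorPoly, map_sum, Finset.sum_mul]
        rw [Finset.sum_comm]
      simp [this, tensorPoly_comp_perm, h]
  have h1 : ∀ σ : Equiv.Perm (Fin n), ∑ f, c (f ∘ σ) * M f = ∑ f, c f * M f := fun σ =>
    Fintype.sum_equiv (Equiv.arrowCongr σ⁻¹ (Equiv.refl α)) _ _ fun f => by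
      have h : Equiv.arrowCongr σ⁻¹ (Equiv.refl α) f = f ∘ σ := rfl
      rw [h, hM]
  have h2 : ∑ σ : Equiv.Perm (Fin n), ∑ f, c (f ∘ σ) * M f = 0 := by
    rw [Finset.sum_comm]
    simp [← Finset.sum_mul, hs]
  simpa [h1, Fintype.card_ne_zero, Nat.factorial_ne_zero] using h2

/-- A form of degree `n` comes from a symmetric tensor: divide each coefficient equally among the
multi-indices giving that monomial. -/
theorem exists_tensorPoly_eq {P : MvPolynomial α ℚ} (hP : P.IsHomogeneous n) :
    ∃ c : (Fin n → α) → ℚ, (∀ f (σ : Equiv.Perm (Fin n)), c (f ∘ σ) = c f) ∧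
      tensorPoly c = P := by
  classical
  refine ⟨fun f => coeff (wt f) P / ({f' | wt f' = wt f} : Finset (Fin n → α)).card, ?_, ?_⟩
  · intro f σ
    simp only [wt_comp_perm]
  · ext m
    rw [coeff_tensorPoly, Finset.sum_congr rfl
      (g := fun _ => coeff m P / ({f' | wt f' = m} : Finset (Fin n → α)).card), Finset.sum_const,
      nsmul_eq_mul]
    · by_cases hm : m.degree = n
      · obtain ⟨f, hf⟩ := exists_wt_eq n m hm
        have h2 : ((({f' | wt f' = m} : Finset (Fin n → α)).card : ℕ) : ℚ) ≠ 0 := by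
          exact_mod_cast Finset.card_ne_zero_of_mem (a := f) (by simp [hf])
        field_simp
      · rw [hP.coeff_eq_zero hm]
        simp
    · intro f hf
      rw [(Finset.mem_filter.1 hf).2]

theorem aeval_tensorPoly (L : α → α → ℚ) (c : (Fin n → α) → ℚ) :
    aeval (fun x => ∑ y, C (L x y) * X y) (tensorPoly c) =
      tensorPoly fun f => ∑ f', c f' * ∏ t, L (f' t) (f t) := by
  classical
  simp only [tensorPoly, map_sum, map_mul, map_prod, aeval_X, algHom_C, algebraMap_eq,
    Finset.prod_univ_sum, Fintype.piFinset_univ, Finset.prod_mul_distrib, Finset.mul_sum,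
    Finset.sum_mul]
  rw [Finset.sum_comm]
  simp only [mul_assoc]

end

/-! ### The commutant of the tensor powers of invertible matrices -/

/-- The action of the symmetric group on `(ℚ^d)^{⊗n}` by permutation of tensor factors, in the
basis indexed by `Fin n → Fin d`. With this convention `permMatrix n d σ` sends a column vector
`v` to `a ↦ v (a ∘ σ)`. -/
def permMatrix (n d : ℕ) :
    Equiv.Perm (Fin n) →* Matrix (Fin n → Fin d) (Fin n → Fin d) ℚ where
  toFun σ := Matrix.of fun a b => if b = a ∘ σ then 1 else 0
  map_one' := by
    ext a b
    simp [Matrix.one_apply, eq_comm]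
  map_mul' σ τ := by
    ext a b
    simp only [Matrix.mul_apply, Matrix.of_apply]
    rw [Finset.sum_eq_single (a ∘ σ)]
    · simp only [if_true, one_mul]
      rfl
    · intro e _ he
      simp [he]
    · simp

theorem permMatrix_mul {n d : ℕ} (σ : Equiv.Perm (Fin n))
    (M : Matrix (Fin n → Fin d) (Fin n → Fin d) ℚ) (a b) :
    (permMatrix n d σ * M) a b = M (a ∘ σ) b := by
  simp [Matrix.mul_apply, permMatrix]

theorem mul_permMatrix {n d : ℕ} (σ : Equiv.Perm (Fin n))
    (M : Matrix (Fin n → Fin d) (Fin n → Fin d) ℚ) (a b) :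
    (M * permMatrix n d σ) a (b ∘ σ) = M a b := by
  have h : ∀ e : Fin n → Fin d, b ∘ σ = e ∘ σ ↔ b = e := fun e =>
    σ.surjective.injective_comp_right.eq_iff
  simp [Matrix.mul_apply, permMatrix, h]

/-- The Kronecker power `g^{⊗n}`, as a matrix indexed by `Fin n → Fin d`. -/
def tensorPow (n : ℕ) {d : ℕ} (g : Matrix (Fin d) (Fin d) ℚ) :
    Matrix (Fin n → Fin d) (Fin n → Fin d) ℚ :=
  Matrix.of fun a b => ∏ t, g (a t) (b t)

theorem tensorPow_mul (n : ℕ) {d : ℕ} (g h : Matrix (Fin d) (Fin d) ℚ) :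
    tensorPow n g * tensorPow n h = tensorPow n (g * h) := by
  ext a b
  simp [tensorPow, Matrix.mul_apply, Finset.prod_univ_sum, Fintype.piFinset_univ,
    Finset.prod_mul_distrib]

theorem tensorPow_one (n d : ℕ) : tensorPow n (1 : Matrix (Fin d) (Fin d) ℚ) = 1 := by
  ext a b
  simp [tensorPow, Matrix.one_apply, Finset.prod_boole, funext_iff]

/-- Invertible matrices are Zariski dense: multiplied by the generic determinant, `Q` vanishes at
every matrix. -/
theorem eq_zero_of_eval_units {d : ℕ} (Q : MvPolynomial (Fin d × Fin d) ℚ)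
    (h : ∀ g : Matrix (Fin d) (Fin d) ℚ, IsUnit g → eval (fun p => g p.1 p.2) Q = 0) : Q = 0 := by
  have hdet : ∀ g : Matrix (Fin d) (Fin d) ℚ,
      eval (fun p => g p.1 p.2) (Matrix.mvPolynomialX (Fin d) (Fin d) ℚ).det = g.det := by
    intro g
    rw [RingHom.map_det, RingHom.mapMatrix_apply]
    congr 1
    ext a b
    simp
  have h0 : Q * (Matrix.mvPolynomialX (Fin d) (Fin d) ℚ).det = 0 := by
    refine MvPolynomial.funext fun x => ?_
    have := hdet (Matrix.of fun a b => x (a, b))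
    have h' := h (Matrix.of fun a b => x (a, b))
    simp only [Matrix.of_apply, Prod.mk.eta] at this h'
    rw [map_mul, map_zero, this]
    by_cases hu : IsUnit (Matrix.of fun a b => x (a, b))
    · rw [h' hu, zero_mul]
    · rw [Matrix.isUnit_iff_isUnit_det, isUnit_iff_ne_zero, not_not] at hu
      rw [hu, mul_zero]
  exact (mul_eq_zero.1 h0).resolve_right (Matrix.det_mvPolynomialX_ne_zero _ _)

/-- The powers `g^{⊗n}` with `g` invertible span the commutant of the symmetric group. In dual form:
each entry of `C * g^{⊗n} - g^{⊗n} * C` is a polynomial in `g` vanishing at invertible `g`, so its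
coefficient tensor pairs to zero with every symmetric tensor, `M` included. -/
theorem commute_of_commute_tensorPow {n d : ℕ} (C : Matrix (Fin n → Fin d) (Fin n → Fin d) ℚ)
    (hC : ∀ g : Matrix (Fin d) (Fin d) ℚ, IsUnit g → C * tensorPow n g = tensorPow n g * C)
    (M : Matrix (Fin n → Fin d) (Fin n → Fin d) ℚ)
    (hM : ∀ (σ : Equiv.Perm (Fin n)) a b, M (a ∘ σ) (b ∘ σ) = M a b) : C * M = M * C := by
  ext a b
  let e : (Fin n → Fin d × Fin d) ≃ (Fin n → Fin d) × (Fin n → Fin d) :=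
    Equiv.arrowProdEquivProdArrow _ _ _
  -- `l` is the coefficient tensor of the linear functional `N ↦ (C * N - N * C) a b`.
  let l : (Fin n → Fin d) × (Fin n → Fin d) → ℚ := fun p =>
    (if p.2 = b then C a p.1 else 0) - (if p.1 = a then C p.2 b else 0)
  have key : ∀ N : Matrix (Fin n → Fin d) (Fin n → Fin d) ℚ,
      ∑ f, l (e f) * N (e f).1 (e f).2 = (C * N) a b - (N * C) a b := by
    intro N
    rw [e.sum_comp fun p => l p * N p.1 p.2]
    simp only [l, sub_mul, Finset.sum_sub_distrib, Matrix.mul_apply]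
    congr 1
    · rw [Fintype.sum_prod_type]
      simp [ite_mul]
    · rw [Fintype.sum_prod_type_right]
      simp [mul_comm]
  have h0 : tensorPoly (fun f => l (e f)) = 0 := by
    refine eq_zero_of_eval_units _ fun g hg => ?_
    have h1 := key (tensorPow n g)
    rw [hC g hg, sub_self] at h1
    rw [← h1]
    simp only [tensorPoly, map_sum, map_mul, eval_C, map_prod, eval_X]
    rfl
  have h2 := sum_mul_eq_zero (M := fun f => M (e f).1 (e f).2) h0
    fun f σ => hM σ (e f).1 (e f).2
  rw [key M] at h2
  exact sub_eq_zero.1 h2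

/-- Schur–Weyl duality: a matrix commuting with all `g^{⊗n}` is a combination of permutations of
the tensor factors. -/
theorem exists_perm_coeffs {n d : ℕ} (C : Matrix (Fin n → Fin d) (Fin n → Fin d) ℚ)
    (hC : ∀ g : Matrix (Fin d) (Fin d) ℚ, IsUnit g → C * tensorPow n g = tensorPow n g * C) :
    ∃ r : Equiv.Perm (Fin n) → ℚ, C = ∑ σ, r σ • permMatrix n d σ := by
  have h := mem_span_of_commute_commutant (permMatrix n d) C fun M hM =>
    commute_of_commute_tensorPow C hC M fun σ a b => by
      rw [← permMatrix_mul σ M, ← hM σ]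
      exact mul_permMatrix σ M a b
  obtain ⟨r, hr⟩ := (Submodule.mem_span_range_iff_exists_fun ℚ).1 h
  exact ⟨r, hr.symm⟩

section
variable {d k n : ℕ}

/-! ### The action by conjugation and invariant coefficient tensors -/

/-- The substitution `ξ_i ↦ g ξ_i h` of generic matrices; conjugation by `g` is `h = g⁻¹`. -/
noncomputable def conj (k : ℕ) (g h : Matrix (Fin d) (Fin d) ℚ) :
    MvPolynomial (Fin k × Fin d × Fin d) ℚ →ₐ[ℚ] MvPolynomial (Fin k × Fin d × Fin d) ℚ :=
  aeval fun x => ∑ y : Fin k × Fin d × Fin d,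
    C (if x.1 = y.1 then g x.2.1 y.2.1 * h y.2.2 x.2.2 else 0) * X y

theorem eval_conj (g h : Matrix (Fin d) (Fin d) ℚ) (P : MvPolynomial (Fin k × Fin d × Fin d) ℚ)
    (x : Fin k → Matrix (Fin d) (Fin d) ℚ) :
    eval (fun p => x p.1 p.2.1 p.2.2) (conj k g h P) =
      eval (fun p => (g * x p.1 * h) p.2.1 p.2.2) P := by
  have h1 : (aeval fun p => x p.1 p.2.1 p.2.2).comp (conj k g h) =
      (aeval fun p => (g * x p.1 * h) p.2.1 p.2.2 : _ →ₐ[ℚ] ℚ) := by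
    refine algHom_ext fun ⟨i, a, b⟩ => ?_
    simp only [conj, AlgHom.comp_apply, aeval_X, map_sum, map_mul, algHom_C, Matrix.mul_apply,
      Finset.sum_mul, Fintype.sum_prod_type]
    rw [Finset.sum_eq_single i]
    · rw [Finset.sum_comm]
      simp [mul_right_comm]
    · intro j _ hj
      simp [hj.symm]
    · simp
  exact DFunLike.congr_fun h1 P

theorem isHomogeneous_conj (g h : Matrix (Fin d) (Fin d) ℚ)
    {P : MvPolynomial (Fin k × Fin d × Fin d) ℚ} (hP : P.IsHomogeneous n) :
    (conj k g h P).IsHomogeneous n := by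
  have := hP.aeval (n := 1) (fun x => ∑ y : Fin k × Fin d × Fin d,
    C (if x.1 = y.1 then g x.2.1 y.2.1 * h y.2.2 x.2.2 else 0) * X y)
    (fun x => IsHomogeneous.sum _ _ _ fun y _ => isHomogeneous_C_mul_X _ _)
  rwa [one_mul] at this

theorem homogeneousComponent_conj (g h : Matrix (Fin d) (Fin d) ℚ)
    (P : MvPolynomial (Fin k × Fin d × Fin d) ℚ) (n : ℕ) :
    homogeneousComponent n (conj k g h P) = conj k g h (homogeneousComponent n P) := by
  conv_lhs => rw [← sum_homogeneousComponent P]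
  simp only [map_sum]
  rw [Finset.sum_congr rfl fun i _ => homogeneousComponent_of_mem
    (isHomogeneous_conj g h (homogeneousComponent_isHomogeneous i P))]
  rw [Finset.sum_ite_eq]
  split_ifs with hn
  · rfl
  · rw [homogeneousComponent_eq_zero _ _ (by simpa using hn), map_zero]

/-- The multi-index in `(Fin k × Fin d × Fin d)^n` with the given components. -/
def zip (u : Fin n → Fin k) (a b : Fin n → Fin d) : Fin n → Fin k × Fin d × Fin d :=
  fun t => (u t, a t, b t)

theorem sum_zip {R : Type*} [AddCommMonoid R] (F : (Fin n → Fin k × Fin d × Fin d) → R) :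
    ∑ f, F f = ∑ u, ∑ a, ∑ b, F (zip u a b) := by
  let e : (Fin n → Fin k × Fin d × Fin d) ≃
      (Fin n → Fin k) × (Fin n → Fin d) × (Fin n → Fin d) :=
    (Equiv.arrowProdEquivProdArrow _ _ _).trans
      ((Equiv.refl _).prodCongr (Equiv.arrowProdEquivProdArrow _ _ _))
  rw [← e.symm.sum_comp, Fintype.sum_prod_type]
  refine Finset.sum_congr rfl fun u _ => ?_
  rw [Fintype.sum_prod_type]
  rfl

/-- If the polynomial of a symmetric tensor `c` is invariant under conjugation, then so is `c`
itself, by uniqueness of the symmetric tensor. For fixed letters `u`, this says that the matrix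
`(a, b) ↦ c (zip u a b)` commutes with `g^{⊗n}`. -/
theorem commute_of_conj_eq {c : (Fin n → Fin k × Fin d × Fin d) → ℚ}
    (hc : ∀ f (σ : Equiv.Perm (Fin n)), c (f ∘ σ) = c f)
    (hinv : ∀ g : Matrix (Fin d) (Fin d) ℚ, IsUnit g →
      conj k g g⁻¹ (tensorPoly c) = tensorPoly c)
    (u : Fin n → Fin k) (g : Matrix (Fin d) (Fin d) ℚ) (hg : IsUnit g) :
    Matrix.of (fun a b => c (zip u a b)) * tensorPow n g =
      tensorPow n g * Matrix.of (fun a b => c (zip u a b)) := by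
  set D : Matrix (Fin n → Fin d) (Fin n → Fin d) ℚ := Matrix.of fun a b => c (zip u a b)
  have hgd : IsUnit g.det := (Matrix.isUnit_iff_isUnit_det g).1 hg
  -- `c'` is the coefficient tensor after conjugation by `gᵀ`; the transpose makes the resulting
  -- equation for `D` read `D = g^{⊗n} D (g⁻¹)^{⊗n}`.
  let c' : (Fin n → Fin k × Fin d × Fin d) → ℚ := fun f => ∑ f', c f' *
    ∏ t, if (f' t).1 = (f t).1 then
      gᵀ (f' t).2.1 (f t).2.1 * (gᵀ)⁻¹ (f t).2.2 (f' t).2.2 else 0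
  have h1 : tensorPoly c' = tensorPoly c :=
    (aeval_tensorPoly (fun x y : Fin k × Fin d × Fin d =>
      if x.1 = y.1 then gᵀ x.2.1 y.2.1 * (gᵀ)⁻¹ y.2.2 x.2.2 else 0) c).symm.trans
      (hinv gᵀ ((Matrix.isUnit_transpose g).2 hg))
  have hc' : ∀ f (σ : Equiv.Perm (Fin n)), c' (f ∘ σ) = c' f := by
    intro f σ
    refine (Fintype.sum_equiv (Equiv.arrowCongr σ⁻¹ (Equiv.refl _)) _ _ fun f' => ?_).symm
    have h : Equiv.arrowCongr σ⁻¹ (Equiv.refl _) f' = f' ∘ σ := rfl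
    rw [h, hc]
    congr 1
    exact (Equiv.prod_comp σ fun t => if (f' t).1 = (f t).1 then
      gᵀ (f' t).2.1 (f t).2.1 * (gᵀ)⁻¹ (f t).2.2 (f' t).2.2 else 0).symm
  have h2 : ∀ f, c' f = c f := by
    intro f
    refine sub_eq_zero.1 (eq_zero_of_tensorPoly_eq_zero (c := fun f => c' f - c f) ?_ ?_ f)
    · intro f σ
      simp only [hc, hc']
    · have : tensorPoly (fun f => c' f - c f) = tensorPoly c' - tensorPoly c := by
        simp [tensorPoly, sub_mul]
      rw [this, h1, sub_self]
  have h3 : D = tensorPow n g * D * tensorPow n g⁻¹ := by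
    ext a b
    have h4 : D a b = ∑ a', ∑ b', D a' b' * ((∏ t, g (a t) (a' t)) * ∏ t, g⁻¹ (b' t) (b t)) := by
      rw [show D a b = c' (zip u a b) from (h2 _).symm]
      simp only [c']
      rw [sum_zip, Finset.sum_eq_single u]
      · simp [zip, D, Finset.prod_mul_distrib, ← Matrix.transpose_nonsing_inv]
      · intro u' _ hu'
        obtain ⟨t, ht⟩ := Function.ne_iff.1 hu'
        refine Finset.sum_eq_zero fun a' _ => Finset.sum_eq_zero fun b' _ => ?_
        rw [Finset.prod_eq_zero (Finset.mem_univ t) (by simp [zip, ht]), mul_zero]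
      · simp
    rw [h4, Finset.sum_comm]
    simp only [Matrix.mul_apply, Finset.sum_mul, tensorPow, Matrix.of_apply]
    refine Finset.sum_congr rfl fun b' _ => Finset.sum_congr rfl fun a' _ => by ring
  calc D * tensorPow n g = tensorPow n g * D * tensorPow n g⁻¹ * tensorPow n g := by rw [← h3]
    _ = tensorPow n g * D := by
      rw [mul_assoc, tensorPow_mul, Matrix.nonsing_inv_mul g hgd, tensorPow_one, mul_one]

theorem mem_of_isHomogeneous {P : MvPolynomial (Fin k × Fin d × Fin d) ℚ}
    (hP : P.IsHomogeneous n)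
    (hinv : ∀ g : Matrix (Fin d) (Fin d) ℚ, IsUnit g → conj k g g⁻¹ P = P)
    (S : Subalgebra ℚ (MvPolynomial (Fin k × Fin d × Fin d) ℚ))
    (hS : ∀ w : List (Fin k), Matrix.trace (w.map fun i =>
      (Matrix.of fun a b => X (i, a, b) :
        Matrix (Fin d) (Fin d) (MvPolynomial (Fin k × Fin d × Fin d) ℚ))).prod ∈ S) :
    P ∈ S := by
  obtain ⟨c, hc, rfl⟩ := exists_tensorPoly_eq hP
  rw [tensorPoly, sum_zip]
  refine S.sum_mem fun u _ => ?_
  obtain ⟨r, hr⟩ := exists_perm_coeffs _ (commute_of_conj_eq hc hinv u)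
  have hr' : ∀ a b, c (zip u a b) = ∑ σ : Equiv.Perm (Fin n), if b = a ∘ σ then r σ else 0 := by
    intro a b
    simpa [permMatrix, Matrix.sum_apply] using congrFun (congrFun hr a) b
  have : ∑ a, ∑ b : Fin n → Fin d, C (c (zip u a b)) * ∏ t, X (zip u a b t) =
      ∑ σ, r σ • ∑ a : Fin n → Fin d, ∏ t, (X (u t, a t, a (σ t)) :
        MvPolynomial (Fin k × Fin d × Fin d) ℚ) := by
    simp only [hr', map_sum, Finset.sum_mul, Finset.smul_sum]
    rw [Finset.sum_comm (s := (Finset.univ : Finset (Equiv.Perm (Fin n))))]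
    refine Finset.sum_congr rfl fun a _ => ?_
    rw [Finset.sum_comm]
    refine Finset.sum_congr rfl fun σ _ => ?_
    rw [Finset.sum_eq_single (a ∘ σ)]
    · simp [zip, smul_eq_C_mul]
    · intro b _ hb
      simp [hb]
    · simp
  rw [this]
  refine S.sum_mem fun σ _ => S.smul_mem ?_ _
  simpa using sum_prod_mem _ S hS n σ fun t => [u t]

end

end MatrixFFT

/-- **First fundamental theorem for matrix invariants.**  A polynomial function of a `k`-tuple of
`d × d` matrices which is invariant under simultaneous conjugation by every invertible matrix
lies in the subalgebra generated by the traces of monomials in the generic matrices. -/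
theorem FFT_matrix_invariants (d k : ℕ) (hd : 1 ≤ d) (hk : 1 ≤ k)
    (P : MvPolynomial (Fin k × Fin d × Fin d) ℚ)
    (hP : ∀ g : Matrix (Fin d) (Fin d) ℚ, IsUnit g →
      ∀ x : Fin k → Matrix (Fin d) (Fin d) ℚ,
        MvPolynomial.eval
          (fun p : Fin k × Fin d × Fin d => (g * x p.1 * g⁻¹) p.2.1 p.2.2) P =
        MvPolynomial.eval
          (fun p : Fin k × Fin d × Fin d => x p.1 p.2.1 p.2.2) P) :
    P ∈ Algebra.adjoin ℚ
      {q : MvPolynomial (Fin k × Fin d × Fin d) ℚ |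
        ∃ w : List (Fin k), q = Matrix.trace
          (w.map fun i =>
            (Matrix.of fun a b => MvPolynomial.X (i, a, b) :
              Matrix (Fin d) (Fin d) (MvPolynomial (Fin k × Fin d × Fin d) ℚ))).prod} := by
  have hinv : ∀ g : Matrix (Fin d) (Fin d) ℚ, IsUnit g → MatrixFFT.conj k g g⁻¹ P = P := by
    intro g hg
    refine MvPolynomial.funext fun x => ?_
    have h := hP g hg fun i => Matrix.of fun a b => x (i, a, b)
    exact (MatrixFFT.eval_conj g g⁻¹ P fun i => Matrix.of fun a b => x (i, a, b)).trans h
  rw [← MvPolynomial.sum_homogeneousComponent P]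
  refine Subalgebra.sum_mem _ fun n _ => MatrixFFT.mem_of_isHomogeneous
    (MvPolynomial.homogeneousComponent_isHomogeneous n P) (fun g hg => ?_) _
    fun w => Algebra.subset_adjoin ⟨w, rfl⟩
  rw [← MatrixFFT.homogeneousComponent_conj, hinv g hg]
end

section
/- Multilinear matrix invariants are spanned by permutation trace functions: Let d, m ≥ 1 and let f be a ℚ-multilinear map from m copies of Matrix (Fin d) (Fin d) ℚ to ℚ which is invariant under simultaneous conjugation: f (fun i => g * x i * g⁻¹) = f x for every invertible g and every x : Fin m → Matrix (Fin d) (Fin d) ℚ. Then f lies in the ℚ-linear span, inside the space of multilinear maps, of the multilinear maps t_σ defined by t_σ x := Matrix.trace (P_{σ⁻¹} * K x), for σ ∈ Equiv.Perm (Fin m). -/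
/-!
Write a multilinear functional as `f x = tr (A * K(x))`, where `A` is a matrix acting on the `m`-th
tensor power of `ℚ^d` (`multilinear_eq_trace`); this is possible because the matrices `K(x)`, for `x`
a tuple of matrix units, are exactly the matrix units of the tensor power. The trace form is
nondegenerate, so invariance of `f` under conjugation by `g` says that `A` commutes with
`g ⊗ ⋯ ⊗ g` (`commute_kron`). It remains to prove that such an `A` is a combination of the
permutation operators, which is Schur–Weyl duality.

The first half (`commute_of_commute_permMat`) shows that `A` commutes with the whole centralizer of
the permutation operators. In characteristic zero, averaging over `S_m` shows that
the centralizer is spanned by the symmetrizations `∑ σ, K(x ∘ σ)`. By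
polarization (`polarization`), a multilinear map `D` that vanishes on the diagonal has vanishing
symmetrization. Here the diagonal vanishing is known for invertible `g` only, so the polarization
formula is used around a base point `c`: the `m`-th finite difference of `y ↦ D (y, …, y)` does not
depend on the base point, and `c` can be chosen scalar so that every matrix appearing in the formula
is invertible (`exists_shift`).

The second half (`double_centralizer`) is the double centralizer theorem: by Maschke's theorem the
tensor power is a semisimple module over `ℚ[S_m]`, so Jacobson's density theorem shows that a linear
map commuting with every `ℚ[S_m]`-endomorphism is given by the action of an element of `ℚ[S_m]`.
-/

/-- The permutation operator `P_σ` on the `m`-th tensor power of the `d`-dimensional space,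
realized as a matrix indexed by functions `Fin m → Fin d`. -/
def permMat (d m : ℕ) (R : Type*) [CommRing R] (σ : Equiv.Perm (Fin m)) :
    Matrix (Fin m → Fin d) (Fin m → Fin d) R :=
  Matrix.of fun f g => if g = f ∘ σ then 1 else 0

/-- The Kronecker product `K(x) = x 0 ⊗ x 1 ⊗ ⋯ ⊗ x (m-1)` of a family of `d × d` matrices. -/
def kron (d m : ℕ) (R : Type*) [CommRing R]
    (x : Fin m → Matrix (Fin d) (Fin d) R) :
    Matrix (Fin m → Fin d) (Fin m → Fin d) R :=
  Matrix.of fun f g => ∏ i, x i (f i) (g i)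

open Finset in
/-- The coefficient with which a choice function `r` contributes to the polarization formula: the
index `none` stands for the base point, and only those `r` that hit every `some j` survive. -/
theorem coeff_aux {m : ℕ} (r : Fin m → Option (Fin m)) :
    (∑ S : Finset (Fin m), if ∀ i, r i ∈ insertNone S then (-1 : ℚ) ^ #S else 0) =
      if ∀ j, ∃ i, r i = some j then (-1 : ℚ) ^ m else 0 := by
  split_ifs with h
  · rw [Finset.sum_eq_single (univ : Finset (Fin m))]
    · simp
    · intro S _ hS
      rw [if_neg]
      intro hr
      apply hS
      ext j
      obtain ⟨i, hi⟩ := h j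
      have := hr i
      rw [hi] at this
      simpa using this
    · simp
  · push Not at h
    obtain ⟨j, hj⟩ := h
    -- if `r` misses `some j`, then adding or removing `j` from `S` cancels the terms in pairs
    refine Finset.sum_involution (fun S _ => symmDiff S {j}) ?_ ?_ ?_ ?_
    · intro S _
      have h1 : (∀ i, r i ∈ insertNone (symmDiff S {j})) ↔ (∀ i, r i ∈ insertNone S) := by
        refine forall_congr' fun i => ?_
        have := hj i
        rcases hi : r i with _ | k
        · simp
        · have hk : k ≠ j := by rintro rfl; exact this hi
          simp [Finset.mem_symmDiff, hk]
      simp only [h1]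
      split_ifs
      · by_cases hS : j ∈ S
        · have : symmDiff S {j} = S.erase j := by
            ext k; by_cases hk : k = j <;> simp [Finset.mem_symmDiff, hk, hS]
          rw [this, ← Finset.card_erase_add_one hS]
          ring
        · have : symmDiff S {j} = insert j S := by
            ext k; by_cases hk : k = j <;> simp [Finset.mem_symmDiff, hk, hS]
          rw [this, Finset.card_insert_of_notMem hS]
          ring
      · simp
    · intro S _ _ hS
      have : j ∈ symmDiff S {j} ↔ j ∈ S := by rw [hS]
      simp [Finset.mem_symmDiff] at this
    · simp
    · intro S _
      simp

open Finset in
/-- Polarization with a base point: the `m`-th finite difference of `y ↦ D (y, …, y)` in the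
directions `x` is the symmetrization of `D` at `x`, whatever the base point `c`. -/
theorem polarization {m : ℕ} {V W : Type*} [AddCommGroup V] [Module ℚ V] [AddCommGroup W]
    [Module ℚ W] (D : MultilinearMap ℚ (fun _ : Fin m => V) W) (c : V) (x : Fin m → V) :
    ∑ S : Finset (Fin m), (-1 : ℚ) ^ #S • D (fun _ => c + ∑ i ∈ S, x i) =
      (-1 : ℚ) ^ m • ∑ σ : Equiv.Perm (Fin m), D (fun i => x (σ i)) := by
  have h1 (S : Finset (Fin m)) : (-1 : ℚ) ^ #S • D (fun _ => c + ∑ i ∈ S, x i) =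
      ∑ r : Fin m → Option (Fin m),
        (if ∀ i, r i ∈ insertNone S then (-1 : ℚ) ^ #S else 0) • D fun i => (r i).elim c x := by
    have := D.map_sum_finset (fun _ o => Option.elim o c x) (fun _ => insertNone S)
    simp only [Finset.sum_insertNone, Option.elim_none, Option.elim_some] at this
    rw [this, Finset.smul_sum]
    simp only [ite_smul, zero_smul]
    rw [← Finset.sum_filter]
    refine Finset.sum_congr ?_ fun _ _ => rfl
    ext r
    simp only [Fintype.mem_piFinset, Finset.mem_filter, Finset.mem_univ, true_and]
  simp only [h1]
  rw [Finset.sum_comm]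
  simp only [← Finset.sum_smul, coeff_aux]
  simp only [ite_smul, zero_smul]
  rw [← Finset.sum_filter, Finset.smul_sum]
  symm
  refine Finset.sum_bij (fun σ _ i => some (σ i)) ?_ ?_ ?_ ?_
  · intro σ _
    simpa using fun j => ⟨σ⁻¹ j, by simp⟩
  · intro σ _ τ _ h
    ext i
    have := congrFun h i
    simp only [Option.some.injEq] at this
    rw [this]
  · intro r hr
    simp only [Finset.mem_filter, Finset.mem_univ, true_and] at hr
    choose s hs using hr
    have hinj : Function.Injective s := fun a b hab => by
      have := hs a
      rw [hab, hs b] at this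
      exact (Option.some.inj this).symm
    let e := Equiv.ofBijective s (Finite.injective_iff_bijective.mp hinj)
    refine ⟨e.symm, Finset.mem_univ _, ?_⟩
    ext1 i
    have := hs (e.symm i)
    rw [← this]
    congr 1
    exact (e.apply_symm_apply i)
  · intro σ _
    rfl

/-- Finitely many matrices over `ℚ` can be made simultaneously invertible by adding one scalar:
such a scalar need only avoid the roots of finitely many characteristic polynomials. -/
theorem exists_shift {d : ℕ} {ι : Type*} [Fintype ι] (Y : ι → Matrix (Fin d) (Fin d) ℚ) :
    ∃ c : ℚ, ∀ s, IsUnit (Matrix.scalar (Fin d) c + Y s) := by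
  have hp : (∏ s, (-Y s).charpoly) ≠ 0 :=
    Finset.prod_ne_zero_iff.mpr fun s _ => (Matrix.charpoly_monic _).ne_zero
  obtain ⟨c, hc⟩ : ∃ c, Polynomial.eval c (∏ s, (-Y s).charpoly) ≠ 0 := by
    by_contra! h
    exact hp (Polynomial.funext fun c => by simpa using h c)
  refine ⟨c, fun s => ?_⟩
  rw [Polynomial.eval_prod, Finset.prod_ne_zero_iff] at hc
  have := hc s (Finset.mem_univ s)
  rw [Matrix.eval_charpoly, sub_neg_eq_add] at this
  rw [Matrix.isUnit_iff_isUnit_det]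
  exact this.isUnit

/-- The symmetrization of a multilinear map vanishes as soon as the map vanishes on the invertible
part of the diagonal. -/
theorem sum_perm_eq_zero {d m : ℕ} {W : Type*} [AddCommGroup W] [Module ℚ W]
    (D : MultilinearMap ℚ (fun _ : Fin m => Matrix (Fin d) (Fin d) ℚ) W)
    (hD : ∀ g : Matrix (Fin d) (Fin d) ℚ, IsUnit g → D (fun _ => g) = 0)
    (x : Fin m → Matrix (Fin d) (Fin d) ℚ) :
    ∑ σ : Equiv.Perm (Fin m), D (fun i => x (σ i)) = 0 := by
  obtain ⟨c, hc⟩ := exists_shift fun S : Finset (Fin m) => ∑ i ∈ S, x i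
  have h := polarization D (Matrix.scalar (Fin d) c) x
  rw [Finset.sum_eq_zero fun S _ => by rw [hD _ (hc S), smul_zero]] at h
  exact (smul_eq_zero.mp h.symm).resolve_left (by simp)

open MonoidAlgebra Matrix in
/-- The double centralizer theorem for a matrix representation of a finite group over `ℚ`. -/
theorem double_centralizer {G n : Type*} [Group G] [Fintype G] [Fintype n] [DecidableEq n]
    (P : G →* Matrix n n ℚ) (A : Matrix n n ℚ)
    (hA : ∀ B : Matrix n n ℚ, (∀ g, Commute B (P g)) → Commute A B) :
    ∃ a : G → ℚ, A = ∑ g, a g • P g := by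
  classical
  let ρ : Representation ℚ G (n → ℚ) :=
    (Matrix.toLinAlgEquiv' : Matrix n n ℚ ≃ₐ[ℚ] _).toAlgHom.toMonoidHom.comp P
  have hρ (g : G) (v : n → ℚ) : ρ g v = P g *ᵥ v := rfl
  have : NeZero (Nat.card G : ℚ) := ⟨by simp⟩
  have hs : IsSemisimpleModule ℚ[G] ρ.asModule := inferInstance
  let e := ρ.asModuleEquiv
  -- multiplication by `A` is linear over the `ℚ[G]`-endomorphisms, since the matrices of these
  -- commute with every `P g`
  let φ : Module.End (Module.End ℚ[G] ρ.asModule) ρ.asModule :=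
    { toFun := fun v => e.symm (A *ᵥ e v)
      map_add' := fun v w => by simp [Matrix.mulVec_add]
      map_smul' := fun T v => by
        let T' : (n → ℚ) →ₗ[ℚ] (n → ℚ) :=
          e.toLinearMap ∘ₗ (T.restrictScalars ℚ) ∘ₗ e.symm.toLinearMap
        have hT' (v) : LinearMap.toMatrix' T' *ᵥ v = e (T (e.symm v)) := by
          rw [← Matrix.toLin'_apply, Matrix.toLin'_toMatrix']; rfl
        have hc := hA (LinearMap.toMatrix' T') fun g => by
          refine Matrix.toLin'.injective (LinearMap.ext fun w => ?_)
          simp only [Matrix.toLin'_apply, ← Matrix.mulVec_mulVec, hT']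
          rw [← hρ, ← hρ, ρ.asModuleEquiv_symm_map_rho, map_smul, ρ.asModuleEquiv_map_smul]
          simp [e]
        have := congrArg (· *ᵥ e v) hc.eq
        simp only [← Matrix.mulVec_mulVec, hT'] at this
        simpa using congrArg e.symm this }
  obtain ⟨r, hr⟩ := jacobson_density φ
    (Finset.univ.image fun i : n => e.symm (Pi.single i 1))
  refine ⟨fun g => r.coeff g, ?_⟩
  refine Matrix.toLin'.injective (LinearMap.pi_ext' fun i => LinearMap.ext_ring ?_)
  have h := congrArg e (hr (e.symm (Pi.single i 1)) (by simp))
  rw [ρ.asModuleEquiv_map_smul] at h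
  simp only [φ, LinearMap.coe_mk, AddHom.coe_mk, LinearEquiv.apply_symm_apply, e] at h
  simp only [LinearMap.coe_comp, LinearMap.coe_single, Function.comp_apply, Matrix.toLin'_apply]
  rw [h, Representation.asAlgebraHom_def, MonoidAlgebra.lift_apply,
    Finsupp.sum_fintype _ _ (by simp)]
  simp only [Matrix.sum_mulVec, Matrix.smul_mulVec, LinearMap.sum_apply, LinearMap.smul_apply, hρ]

theorem permMat_mul (d m : ℕ) (σ τ : Equiv.Perm (Fin m)) :
    permMat d m ℚ σ * permMat d m ℚ τ = permMat d m ℚ (σ * τ) := by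
  ext f g
  simp only [permMat, Matrix.mul_apply, Matrix.of_apply, ite_mul, one_mul, zero_mul,
    Finset.sum_ite_eq', Finset.mem_univ, if_true]
  rfl

theorem permMat_one (d m : ℕ) : permMat d m ℚ 1 = 1 := by
  ext f g
  simp [permMat, Matrix.one_apply, eq_comm]

/-- The representation `σ ↦ P_σ` of the symmetric group by permutation operators. -/
def permHom (d m : ℕ) :
    Equiv.Perm (Fin m) →* Matrix (Fin m → Fin d) (Fin m → Fin d) ℚ where
  toFun := permMat d m ℚ
  map_one' := permMat_one d m
  map_mul' σ τ := (permMat_mul d m σ τ).symm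

/-- Conjugation by `P_σ` permutes the tensor factors. -/
theorem permMat_mul_kron (d m : ℕ) (σ : Equiv.Perm (Fin m))
    (x : Fin m → Matrix (Fin d) (Fin d) ℚ) :
    permMat d m ℚ σ * kron d m ℚ (fun i => x (σ i)) = kron d m ℚ x * permMat d m ℚ σ := by
  ext f g
  have h (h : Fin m → Fin d) : g = h ∘ σ ↔ h = g ∘ σ.symm := by
    rw [Equiv.eq_comp_symm, eq_comm]
  simp only [permMat, kron, Matrix.mul_apply, Matrix.of_apply, h]
  simp only [ite_mul, one_mul, zero_mul, Finset.sum_ite_eq', Finset.mem_univ, if_true, mul_ite,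
    mul_one, mul_zero]
  rw [← Equiv.prod_comp σ fun i => x i (f i) ((g ∘ σ.symm) i)]
  simp

theorem kron_mul (d m : ℕ) (x y : Fin m → Matrix (Fin d) (Fin d) ℚ) :
    kron d m ℚ (fun i => x i * y i) = kron d m ℚ x * kron d m ℚ y := by
  ext f g
  simp only [kron, Matrix.mul_apply, Matrix.of_apply, Finset.prod_univ_sum,
    Fintype.piFinset_univ, Finset.prod_mul_distrib]

theorem kron_one (d m : ℕ) : kron d m ℚ (fun _ => 1) = 1 := by
  ext f g
  simp only [kron, Matrix.of_apply, Matrix.one_apply, Finset.prod_ite_zero, funext_iff]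
  simp

theorem kron_single (d m : ℕ) (a b : Fin m → Fin d) :
    kron d m ℚ (fun i => Matrix.single (a i) (b i) 1) = Matrix.single a b 1 := by
  ext f g
  simp only [kron, Matrix.of_apply, Matrix.single_apply, Finset.prod_ite_zero, funext_iff,
    ← forall_and]
  simp

/-- The Kronecker product `x ↦ K(x)` as a multilinear map. -/
def kronMultilinear (d m : ℕ) :
    MultilinearMap ℚ (fun _ : Fin m => Matrix (Fin d) (Fin d) ℚ)
      (Matrix (Fin m → Fin d) (Fin m → Fin d) ℚ) :=
  MultilinearMap.pi fun f => MultilinearMap.pi fun g =>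
    (MultilinearMap.mkPiAlgebra ℚ (Fin m) ℚ).compLinearMap
      fun i => Matrix.entryLinearMap ℚ ℚ (f i) (g i)

theorem kronMultilinear_apply (d m : ℕ) (x : Fin m → Matrix (Fin d) (Fin d) ℚ) :
    kronMultilinear d m x = kron d m ℚ x := by
  rfl

/-- Nondegeneracy of the trace form. -/
theorem trace_ext {n : Type*} [Fintype n] [DecidableEq n] {A B : Matrix n n ℚ}
    (h : ∀ a b, Matrix.trace (A * Matrix.single a b 1) = Matrix.trace (B * Matrix.single a b 1)) :
    A = B := by
  ext b a
  simpa [Matrix.trace_mul_single] using h a b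

/-- Every multilinear functional, invariant or not, is of the form `x ↦ tr (A * K(x))`. -/
theorem multilinear_eq_trace {d m : ℕ}
    (f : MultilinearMap ℚ (fun _ : Fin m => Matrix (Fin d) (Fin d) ℚ) ℚ) :
    ∃ A : Matrix (Fin m → Fin d) (Fin m → Fin d) ℚ,
      ∀ x, f x = Matrix.trace (A * kron d m ℚ x) := by
  refine ⟨Matrix.of fun b a => f fun i => Matrix.single (a i) (b i) 1, fun x => ?_⟩
  set A : Matrix (Fin m → Fin d) (Fin m → Fin d) ℚ :=
    Matrix.of fun b a => f fun i => Matrix.single (a i) (b i) 1 with hA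
  have : f = (Matrix.traceLinearMap _ ℚ ℚ ∘ₗ LinearMap.mulLeft ℚ A).compMultilinearMap
      (kronMultilinear d m) := by
    refine Module.Basis.ext_multilinear (fun _ => Matrix.stdBasis ℚ (Fin d) (Fin d)) fun v => ?_
    have hv : (fun i => Matrix.stdBasis ℚ (Fin d) (Fin d) (v i)) =
        fun i => Matrix.single (v i).1 (v i).2 1 :=
      funext fun i => Matrix.stdBasis_eq_single ℚ (v i).1 (v i).2
    simp only [hv, LinearMap.compMultilinearMap_apply,
      LinearMap.comp_apply, kronMultilinear_apply, kron_single, LinearMap.mulLeft_apply,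
      Matrix.traceLinearMap_apply]
    simp [hA, Matrix.trace_mul_single]
  conv_lhs => rw [this]
  simp [kronMultilinear_apply]

/-- If `x ↦ tr (A * K(x))` is invariant under conjugation, then `A` commutes with `g ⊗ ⋯ ⊗ g` for
every invertible `g`. -/
theorem commute_kron {d m : ℕ} (f : MultilinearMap ℚ (fun _ : Fin m => Matrix (Fin d) (Fin d) ℚ) ℚ)
    (hf : ∀ g : Matrix (Fin d) (Fin d) ℚ, IsUnit g →
      ∀ x : Fin m → Matrix (Fin d) (Fin d) ℚ, f (fun i => g * x i * g⁻¹) = f x)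
    (A : Matrix (Fin m → Fin d) (Fin m → Fin d) ℚ)
    (hA : ∀ x, f x = Matrix.trace (A * kron d m ℚ x))
    (g : Matrix (Fin d) (Fin d) ℚ) (hg : IsUnit g) :
    A * kron d m ℚ (fun _ => g) = kron d m ℚ (fun _ => g) * A := by
  have hgd := (Matrix.isUnit_iff_isUnit_det g).mp hg
  set K := kron d m ℚ (fun _ => g)
  set K' := kron d m ℚ (fun _ => g⁻¹)
  have hKK' : K * K' = 1 := by
    rw [← kron_mul, Matrix.mul_nonsing_inv g hgd, kron_one]
  have h : K' * A * K = A := by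
    refine trace_ext fun a b => ?_
    rw [← kron_single, ← hA, ← hf g hg, hA, kron_mul, kron_mul]
    rw [Matrix.mul_assoc, Matrix.mul_assoc, Matrix.trace_mul_comm]
    simp only [Matrix.mul_assoc]
    rfl
  calc A * K = K * K' * (A * K) := by rw [hKK', one_mul]
    _ = K * (K' * A * K) := by simp only [Matrix.mul_assoc]
    _ = K * A := by rw [h]

/-- A matrix that commutes with all `g ⊗ ⋯ ⊗ g`, `g` invertible, commutes with the whole
centralizer of the permutation operators. -/
theorem commute_of_commute_permMat {d m : ℕ} (A : Matrix (Fin m → Fin d) (Fin m → Fin d) ℚ)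
    (hA : ∀ g : Matrix (Fin d) (Fin d) ℚ, IsUnit g →
      A * kron d m ℚ (fun _ => g) = kron d m ℚ (fun _ => g) * A)
    (B : Matrix (Fin m → Fin d) (Fin m → Fin d) ℚ)
    (hB : ∀ σ, Commute B (permMat d m ℚ σ)) : Commute A B := by
  let L : Matrix (Fin m → Fin d) (Fin m → Fin d) ℚ →ₗ[ℚ]
      Matrix (Fin m → Fin d) (Fin m → Fin d) ℚ := LinearMap.mulLeft ℚ A - LinearMap.mulRight ℚ A
  have hL (X) : L X = A * X - X * A := rfl
  have hz (x : Fin m → Matrix (Fin d) (Fin d) ℚ) :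
      ∑ σ : Equiv.Perm (Fin m), L (kron d m ℚ fun i => x (σ i)) = 0 := by
    have := sum_perm_eq_zero (L.compMultilinearMap (kronMultilinear d m)) (fun g hg => by
      simp only [LinearMap.compMultilinearMap_apply, kronMultilinear_apply, hL, hA g hg, sub_self]) x
    simpa only [LinearMap.compMultilinearMap_apply, kronMultilinear_apply] using this
  have hconj (σ : Equiv.Perm (Fin m)) (x : Fin m → Matrix (Fin d) (Fin d) ℚ) :
      permMat d m ℚ σ⁻¹ * kron d m ℚ x * permMat d m ℚ σ = kron d m ℚ (fun i => x (σ i)) := by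
    rw [mul_assoc, ← permMat_mul_kron, ← mul_assoc, permMat_mul, inv_mul_cancel, permMat_one,
      one_mul]
  -- expand `B = P_σ⁻¹ B P_σ` in matrix units; summing over `σ` then symmetrizes each of them
  have hBσ (σ : Equiv.Perm (Fin m)) :
      B = ∑ a, ∑ b, B a b • kron d m ℚ (fun i => Matrix.single (a (σ i)) (b (σ i)) 1) := by
    calc B = permMat d m ℚ σ⁻¹ * B * permMat d m ℚ σ := by
          rw [mul_assoc, (hB σ).eq, ← mul_assoc, permMat_mul, inv_mul_cancel, permMat_one, one_mul]
      _ = permMat d m ℚ σ⁻¹ * (∑ a, ∑ b, B a b • kron d m ℚ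
            (fun i => Matrix.single (a i) (b i) 1)) * permMat d m ℚ σ := by
          congr 2
          conv_lhs => rw [Matrix.matrix_eq_sum_single B]
          simp [kron_single]
      _ = _ := by
          simp only [Finset.mul_sum, Finset.sum_mul, mul_smul_comm, smul_mul_assoc,
            hconj σ (fun i => Matrix.single _ _ 1)]
  have hsum : ∑ _σ : Equiv.Perm (Fin m), L B = 0 := by
    calc ∑ _σ : Equiv.Perm (Fin m), L B
        = ∑ σ : Equiv.Perm (Fin m), ∑ a, ∑ b,
            B a b • L (kron d m ℚ (fun i => Matrix.single (a (σ i)) (b (σ i)) 1)) := by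
          refine Finset.sum_congr rfl fun σ _ => ?_
          conv_lhs => rw [hBσ σ]
          simp only [map_sum, map_smul]
      _ = ∑ a, ∑ b, B a b • ∑ σ : Equiv.Perm (Fin m),
            L (kron d m ℚ (fun i => Matrix.single (a (σ i)) (b (σ i)) 1)) := by
          rw [Finset.sum_comm]
          refine Finset.sum_congr rfl fun a _ => ?_
          rw [Finset.sum_comm]
          simp only [Finset.smul_sum]
      _ = 0 := by
          refine Finset.sum_eq_zero fun a _ => Finset.sum_eq_zero fun b _ => ?_
          rw [hz fun i => Matrix.single (a i) (b i) 1, smul_zero]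
  rw [Finset.sum_const, Finset.card_univ, ← Nat.cast_smul_eq_nsmul ℚ] at hsum
  have hLB := (smul_eq_zero.mp hsum).resolve_left (by simp [Fintype.card_ne_zero])
  exact sub_eq_zero.mp hLB

/-- **Multilinear matrix invariants are spanned by permutation trace functions.**  A multilinear
map `f` from `m` copies of `Matrix (Fin d) (Fin d) ℚ` to `ℚ` which is invariant under simultaneous
conjugation by every invertible matrix is a linear combination of the trace functions
`t_σ x = trace (P_{σ⁻¹} * K x)`, `σ ∈ S_m`. -/
theorem multilinear_invariants_spanned_by_trace_functions (d m : ℕ) (hd : 1 ≤ d) (hm : 1 ≤ m)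
    (f : MultilinearMap ℚ (fun _ : Fin m => Matrix (Fin d) (Fin d) ℚ) ℚ)
    (hf : ∀ g : Matrix (Fin d) (Fin d) ℚ, IsUnit g →
      ∀ x : Fin m → Matrix (Fin d) (Fin d) ℚ, f (fun i => g * x i * g⁻¹) = f x) :
    ∃ a : Equiv.Perm (Fin m) → ℚ, ∀ x : Fin m → Matrix (Fin d) (Fin d) ℚ,
      f x = ∑ σ : Equiv.Perm (Fin m),
        a σ * Matrix.trace (permMat d m ℚ σ⁻¹ * kron d m ℚ x) := by
  obtain ⟨A, hA⟩ := multilinear_eq_trace f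
  obtain ⟨a, ha⟩ := double_centralizer (permHom d m) A
    (commute_of_commute_permMat A (commute_kron f hf A hA))
  -- the trace functions are indexed by `σ⁻¹`, whence the inverse
  refine ⟨fun σ => a σ⁻¹, fun x => ?_⟩
  rw [hA, ha, Finset.sum_mul, Matrix.trace_sum,
    ← Equiv.sum_comp (Equiv.inv (Equiv.Perm (Fin m)))]
  simp [permHom, Matrix.trace_smul]
end

section
/- Trace of a full cycle acting on a Kronecker product: Let d, m ≥ 1, let R be a commutative ring, let c ∈ Equiv.Perm (Fin m) be the full cycle i ↦ i + 1 (mod m) (finRotate m), and let x : Fin m → Matrix (Fin d) (Fin d) R. Then Matrix.trace (P_{c⁻¹} * K x) = Matrix.trace ((List.ofFn x).prod), the trace of the ordered matrix product x 0 * x 1 * ⋯ * x (m−1). -/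
/-- The `(a, b)` entry of an ordered product of `n + 1` matrices is a sum over the `n` intermediate
indices `v` of a walk from `a` to `b`: the `i`-th step goes from the `i`-th entry of `Fin.cons a v`
to the `i`-th entry of `Fin.snoc v b`. -/
theorem ofFn_prod_apply {d : ℕ} {R : Type*} [CommRing R] (n : ℕ)
    (x : Fin (n + 1) → Matrix (Fin d) (Fin d) R) (a b : Fin d) :
    (List.ofFn x).prod a b =
      ∑ v : Fin n → Fin d, ∏ i, x i ((Fin.cons a v : Fin (n + 1) → Fin d) i)
        ((Fin.snoc v b : Fin (n + 1) → Fin d) i) := by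
  induction n generalizing a with
  | zero => simp [Fin.snoc]
  | succ n ih =>
    rw [List.ofFn_succ, List.prod_cons, Matrix.mul_apply,
      ← (Fin.consEquiv fun _ : Fin (n + 1) => Fin d).sum_comp, Fintype.sum_prod_type]
    refine Finset.sum_congr rfl fun c _ => ?_
    rw [ih, Finset.mul_sum]
    refine Finset.sum_congr rfl fun v _ => ?_
    simp only [Fin.consEquiv, Equiv.coe_fn_mk, ← Fin.cons_snoc_eq_snoc_cons]
    rw [Fin.prod_univ_succ (n := n + 1)]
    simp only [Fin.cons_zero, Fin.cons_succ]

/-- **Trace of a full cycle acting on a Kronecker product.**  For the full cycle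
`c = finRotate m` one has `trace (P_{c⁻¹} * K x) = trace (x 0 * x 1 * ⋯ * x (m-1))`. -/
theorem trace_full_cycle_kron (d m : ℕ) (hd : 1 ≤ d) (hm : 1 ≤ m)
    (R : Type*) [CommRing R] (x : Fin m → Matrix (Fin d) (Fin d) R) :
    Matrix.trace (permMat d m R (finRotate m)⁻¹ * kron d m R x) =
      Matrix.trace (List.ofFn x).prod := by
  obtain ⟨n, rfl⟩ : ∃ n, m = n + 1 := ⟨m - 1, by omega⟩
  have entry (f : Fin (n + 1) → Fin d) :
      (permMat d (n + 1) R (finRotate (n + 1))⁻¹ * kron d (n + 1) R x) f f =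
        ∏ i, x i (f ((finRotate (n + 1))⁻¹ i)) (f i) := by
    simp [Matrix.mul_apply, permMat, kron]
  simp only [Matrix.trace, Matrix.diag_apply, entry, ofFn_prod_apply]
  -- Substituting `f = g ∘ c` turns the factors into `x i (g i) (g (c i))`.
  rw [← ((finRotate (n + 1)).symm.arrowCongr (Equiv.refl (Fin d))).sum_comp,
    ← (Fin.consEquiv fun _ : Fin (n + 1) => Fin d).sum_comp, Fintype.sum_prod_type]
  refine Finset.sum_congr rfl fun a _ => Finset.sum_congr rfl fun v _ => ?_
  simp [Fin.consEquiv, Fin.snoc_eq_cons_rotate]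
end

section
/- First fundamental theorem for tensor-valued equivariant maps: Let d, k, n ≥ 1 and let H be a ℚ-multilinear map from k copies of Matrix (Fin d) (Fin d) ℚ to Matrix (Fin n → Fin d) (Fin n → Fin d) ℚ which is GL-equivariant: for every invertible g : Matrix (Fin d) (Fin d) ℚ and every x : Fin k → Matrix (Fin d) (Fin d) ℚ, H (fun i => g * x i * g⁻¹) = K(fun _ => g) * H x * K(fun _ => g⁻¹). Then there exist coefficients a : Equiv.Perm (Fin (n+k)) → ℚ such that for all x : Fin k → Matrix (Fin d) (Fin d) ℚ and all y : Fin n → Matrix (Fin d) (Fin d) ℚ, Matrix.trace (H x * K y) = ∑_{τ ∈ Perm (Fin (n+k))} a τ * Matrix.trace (P_{τ⁻¹} * K (Fin.append y x)), where Fin.append y x : Fin (n+k) → Matrix (Fin d) (Fin d) ℚ places the y's in the first n positions and the x's in the last k positions. -/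
namespace TensorFFT

/-- The double centralizer theorem for a finite-dimensional representation of a finite group in
characteristic zero: an operator commuting with all intertwiners comes from the group algebra. -/
theorem exists_asAlgebraHom_eq {F G V : Type*} [Field F] [CharZero F] [Group G] [Finite G]
    [AddCommGroup V] [Module F V] [FiniteDimensional F V] (ρ : Representation F G V)
    (φ : Module.End F V)
    (hφ : ∀ ψ : Module.End F V, (∀ g, ψ ∘ₗ ρ g = ρ g ∘ₗ ψ) → φ ∘ₗ ψ = ψ ∘ₗ φ) :
    ∃ r : MonoidAlgebra F G, φ = ρ.asAlgebraHom r := by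
  have : NeZero (Nat.card G : F) := ⟨Nat.cast_ne_zero.2 Nat.card_pos.ne'⟩
  -- `φ` is linear over the ring of intertwiners, as Jacobson density requires.
  let f : Module.End (Module.End (MonoidAlgebra F G) ρ.asModule) ρ.asModule :=
    { toFun := fun v => ρ.asModuleEquiv.symm (φ (ρ.asModuleEquiv v))
      map_add' := fun v w => by simp
      map_smul' := fun e v => by
        let ψ : Module.End F V :=
          { toFun := fun v => ρ.asModuleEquiv (e (ρ.asModuleEquiv.symm v))
            map_add' := fun v w => by simp
            map_smul' := fun a v => by
              rw [ρ.asModuleEquiv_symm_map_smul, map_smul, ρ.asModuleEquiv_map_smul]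
              simp [Algebra.algebraMap_eq_smul_one] }
        have h := hφ ψ (fun g => LinearMap.ext fun v => by
          change ρ.asModuleEquiv (e (ρ.asModuleEquiv.symm (ρ g v))) =
            ρ g (ρ.asModuleEquiv (e (ρ.asModuleEquiv.symm v)))
          rw [ρ.asModuleEquiv_symm_map_rho, map_smul, ρ.asModuleEquiv_map_smul,
            Representation.asAlgebraHom_of])
        exact LinearMap.congr_fun h v }
  -- Density gives agreement on finitely many vectors, and a finite spanning set suffices.
  obtain ⟨s, hs⟩ := Module.Finite.fg_top (R := F) (M := V)
  obtain ⟨r, hr⟩ := jacobson_density f (s : Finset ρ.asModule)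
  exact ⟨r, LinearMap.ext_on hs fun v hv => hr v hv⟩

variable {d N : ℕ}

theorem kron_mul (x y : Fin N → Matrix (Fin d) (Fin d) ℚ) :
    kron d N ℚ x * kron d N ℚ y = kron d N ℚ (fun i => x i * y i) := by
  ext f g
  simp only [kron, Matrix.mul_apply, Matrix.of_apply, Finset.prod_univ_sum, Fintype.piFinset_univ,
    Finset.prod_mul_distrib]

theorem kron_one : kron d N ℚ (fun _ => 1) = 1 := by
  ext f g
  simp [kron, Matrix.one_apply, Finset.prod_ite_zero, funext_iff]

theorem kron_single (f g : Fin N → Fin d) :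
    kron d N ℚ (fun i => Matrix.single (f i) (g i) 1) = Matrix.single f g 1 := by
  ext u v
  simp [kron, Matrix.single_apply, Finset.prod_ite_zero, funext_iff, forall_and]

/-- Kronecker products separate matrices under the trace form, as matrix units are among them. -/
theorem eq_of_trace_kron {A B : Matrix (Fin N → Fin d) (Fin N → Fin d) ℚ}
    (h : ∀ z, Matrix.trace (A * kron d N ℚ z) = Matrix.trace (B * kron d N ℚ z)) : A = B := by
  ext f g
  simpa [kron_single, Matrix.trace_mul_single] using
    h (fun i => Matrix.single (g i) (f i) 1)

/-- The natural action of `Perm (Fin N)` on the `N`-th tensor power by `permMat`. -/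
def permRep (d N : ℕ) : Representation ℚ (Equiv.Perm (Fin N)) ((Fin N → Fin d) → ℚ) where
  toFun σ := LinearMap.funLeft ℚ ℚ (fun f => f ∘ σ)
  map_one' := rfl
  map_mul' _ _ := rfl

theorem permRep_apply (σ : Equiv.Perm (Fin N)) (v : (Fin N → Fin d) → ℚ) (f : Fin N → Fin d) :
    permRep d N σ v f = v (f ∘ σ) := rfl

theorem permRep_eq (σ : Equiv.Perm (Fin N)) :
    permRep d N σ = Matrix.toLin' (permMat d N ℚ σ) := by
  ext f g
  simp [permRep_apply, permMat, Pi.single_apply, eq_comm]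

/-- The exponent of the monomial in position `(f, g)` of `X ⊗ ⋯ ⊗ X`, for a generic matrix `X`. -/
noncomputable def weight (p : (Fin N → Fin d) × (Fin N → Fin d)) : Fin d × Fin d →₀ ℕ :=
  ∑ i, Finsupp.single (p.1 i, p.2 i) 1

theorem prod_X_eq (f g : Fin N → Fin d) :
    (∏ i, MvPolynomial.X (f i, g i) : MvPolynomial (Fin d × Fin d) ℚ) =
      MvPolynomial.monomial (weight (f, g)) 1 := by
  simp [weight, MvPolynomial.monomial_sum_one, MvPolynomial.X]

/-- Positions carrying the same monomial lie in one orbit of the symmetric group. -/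
theorem exists_perm_of_weight_eq {p q : (Fin N → Fin d) × (Fin N → Fin d)}
    (h : weight p = weight q) :
    ∃ σ : Equiv.Perm (Fin N), p.1 = q.1 ∘ σ ∧ p.2 = q.2 ∘ σ := by
  -- Equal exponents mean that each pair `c` occurs equally often in `p` and in `q`.
  have key : ∀ c, Nonempty ({i // (p.1 i, p.2 i) = c} ≃ {i // (q.1 i, q.2 i) = c}) := fun c => by
    rw [← Fintype.card_eq, Fintype.card_subtype, Fintype.card_subtype]
    simpa [weight, Finsupp.finsetSum_apply, Finsupp.single_apply] using DFunLike.congr_fun h c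
  have e := fun c => (key c).some
  refine ⟨Equiv.ofFiberEquiv e, funext fun i => ?_, funext fun i => ?_⟩
  · exact (congrArg Prod.fst (Equiv.ofFiberEquiv_map e i)).symm
  · exact (congrArg Prod.snd (Equiv.ofFiberEquiv_map e i)).symm

/-- The commutant of the operators `g ⊗ ⋯ ⊗ g` with `g` invertible also commutes with every
matrix invariant under simultaneous permutation of the tensor factors. -/
theorem commute_of_commute_kron {M : Matrix (Fin N → Fin d) (Fin N → Fin d) ℚ}
    (hM : ∀ g : Matrix (Fin d) (Fin d) ℚ, IsUnit g →
      M * kron d N ℚ (fun _ => g) = kron d N ℚ (fun _ => g) * M)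
    {T : Matrix (Fin N → Fin d) (Fin N → Fin d) ℚ}
    (hT : ∀ (σ : Equiv.Perm (Fin N)) f g, T (f ∘ σ) (g ∘ σ) = T f g) :
    M * T = T * M := by
  -- `T` only depends on the monomial in a given position, hence is read off by a functional `L`.
  let t : (Fin N → Fin d) × (Fin N → Fin d) → ℚ := fun p => T p.1 p.2
  have ht : t.FactorsThrough weight := fun p q h => by
    obtain ⟨σ, h1, h2⟩ := exists_perm_of_weight_eq h
    simp only [t, h1, h2, hT]
  let L : MvPolynomial (Fin d × Fin d) ℚ →ₗ[ℚ] ℚ :=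
    (MvPolynomial.basisMonomials (Fin d × Fin d) ℚ).constr ℚ (Function.extend weight t 0)
  have hL : ∀ f g, L (∏ i, MvPolynomial.X (f i, g i)) = T f g := fun f g => by
    rw [prod_X_eq]
    exact (Module.Basis.constr_basis _ ℚ _ _).trans (ht.extend_apply 0 (f, g))
  ext f g
  have hpq : (∑ h, M f h • ∏ i, MvPolynomial.X (h i, g i) : MvPolynomial (Fin d × Fin d) ℚ) =
      ∑ h, M h g • ∏ i, MvPolynomial.X (f i, h i) := by
    refine MvPolynomial.eq_of_eval_eq_on_gl fun γ => ?_
    have := congrFun (congrFun (hM γ γ.isUnit) f) g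
    simpa [Matrix.mul_apply, kron, MvPolynomial.smul_eval, MvPolynomial.eval_prod, mul_comm]
      using this
  have := congrArg L hpq
  simpa [map_sum, map_smul, hL, Matrix.mul_apply, mul_comm] using this

/-- The commutant of the operators `g ⊗ ⋯ ⊗ g` is spanned by the permutation operators. -/
theorem exists_sum_permMat {M : Matrix (Fin N → Fin d) (Fin N → Fin d) ℚ}
    (hM : ∀ g : Matrix (Fin d) (Fin d) ℚ, IsUnit g →
      M * kron d N ℚ (fun _ => g) = kron d N ℚ (fun _ => g) * M) :
    ∃ b : Equiv.Perm (Fin N) → ℚ, M = ∑ σ, b σ • permMat d N ℚ σ := by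
  obtain ⟨r, hr⟩ := exists_asAlgebraHom_eq (permRep d N) (Matrix.toLin' M) (fun ψ hψ => by
    obtain ⟨T, rfl⟩ := Matrix.toLin'.surjective ψ
    rw [← Matrix.toLin'_mul, ← Matrix.toLin'_mul]
    refine congrArg _ (commute_of_commute_kron hM fun σ f g => ?_)
    -- Evaluate the intertwining relation on a basis vector to get one matrix entry of `T`.
    have := congrFun (LinearMap.congr_fun (hψ σ) (Pi.single (g ∘ σ) 1)) f
    have hs : permRep d N σ (Pi.single (g ∘ σ) 1) = Pi.single g 1 := by
      ext u
      simp [permRep_apply, Pi.single_apply,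
        σ.surjective.injective_comp_right.eq_iff]
    rw [LinearMap.comp_apply, LinearMap.comp_apply, hs] at this
    simpa [permRep_apply] using this.symm)
  refine ⟨fun σ => r.coeff σ, Matrix.toLin'.injective ?_⟩
  rw [hr, Representation.asAlgebraHom_def, MonoidAlgebra.lift_apply,
    Finsupp.sum_fintype _ _ (by simp)]
  simp [permRep_eq]

/-- The functional `(y, x) ↦ trace (H x * K y)` is represented by a matrix on the tensor power. -/
theorem exists_trace_form {k n : ℕ}
    (H : MultilinearMap ℚ (fun _ : Fin k => Matrix (Fin d) (Fin d) ℚ)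
      (Matrix (Fin n → Fin d) (Fin n → Fin d) ℚ)) :
    ∃ M : Matrix (Fin (n + k) → Fin d) (Fin (n + k) → Fin d) ℚ, ∀ x y,
      Matrix.trace (H x * kron d n ℚ y) =
        Matrix.trace (M * kron d (n + k) ℚ (Fin.append y x)) := by
  refine ⟨Matrix.of fun f g =>
    H (fun j => Matrix.single (g (Fin.natAdd n j)) (f (Fin.natAdd n j)) 1)
      (fun i => f (Fin.castAdd k i)) (fun i => g (Fin.castAdd k i)), fun x y => ?_⟩
  -- Expand `H` multilinearly over matrix units.
  have hx : H x = ∑ v : Fin k → Fin d, ∑ u : Fin k → Fin d,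
      (∏ j, x j (v j) (u j)) • H (fun j => Matrix.single (v j) (u j) 1) := by
    have h1 : x = fun j => ∑ p : Fin d × Fin d,
        x j p.1 p.2 • Matrix.single p.1 p.2 (1 : ℚ) := by
      funext j
      conv_lhs => rw [Matrix.matrix_eq_sum_single (x j)]
      simp [Fintype.sum_prod_type]
    conv_lhs => rw [h1]
    rw [H.map_sum, ← Fintype.sum_prod_type',
      ← Equiv.sum_comp (Equiv.arrowProdEquivProdArrow (Fin k) (fun _ => Fin d) (fun _ => Fin d))]
    exact Finset.sum_congr rfl fun r _ =>
      H.map_smul_univ (fun j => x j (r j).1 (r j).2) fun j => Matrix.single (r j).1 (r j).2 1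
  simp only [Matrix.trace, Matrix.diag, Matrix.mul_apply, hx, Matrix.sum_apply, Matrix.smul_apply]
  simp only [← (Fin.appendEquiv (α := Fin d) n k).sum_comp, Fintype.sum_prod_type]
  simp only [Fin.appendEquiv, Equiv.coe_fn_mk, kron, Matrix.of_apply, Fin.prod_univ_add,
    Fin.append_left, Fin.append_right, smul_eq_mul, Finset.sum_mul]
  refine Finset.sum_congr rfl fun u _ => ?_
  rw [Finset.sum_comm (γ := Fin k → Fin d)]
  refine Finset.sum_congr rfl fun v _ => ?_
  rw [Finset.sum_comm]
  refine Finset.sum_congr rfl fun u' _ => Finset.sum_congr rfl fun v' _ => ?_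
  ring

end TensorFFT

/-- **First fundamental theorem for tensor-valued equivariant maps.**  A multilinear,
`GL`-equivariant map `H` from `k` copies of `Matrix (Fin d) (Fin d) ℚ` to the `n`-th tensor power
of the matrix algebra satisfies: there are coefficients `a τ`, `τ ∈ S_{n+k}`, such that
`trace (H x * K y) = ∑_τ a τ * trace (P_{τ⁻¹} * K (Fin.append y x))` for all `x`, `y`. -/
theorem FFT_tensor_valued_equivariant (d k n : ℕ) (hd : 1 ≤ d) (hk : 1 ≤ k) (hn : 1 ≤ n)
    (H : MultilinearMap ℚ (fun _ : Fin k => Matrix (Fin d) (Fin d) ℚ)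
      (Matrix (Fin n → Fin d) (Fin n → Fin d) ℚ))
    (hH : ∀ g : Matrix (Fin d) (Fin d) ℚ, IsUnit g →
      ∀ x : Fin k → Matrix (Fin d) (Fin d) ℚ,
        H (fun i => g * x i * g⁻¹) =
          kron d n ℚ (fun _ => g) * H x * kron d n ℚ (fun _ => g⁻¹)) :
    ∃ a : Equiv.Perm (Fin (n + k)) → ℚ,
      ∀ (x : Fin k → Matrix (Fin d) (Fin d) ℚ) (y : Fin n → Matrix (Fin d) (Fin d) ℚ),
        Matrix.trace (H x * kron d n ℚ y) =
          ∑ τ : Equiv.Perm (Fin (n + k)),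
            a τ * Matrix.trace (permMat d (n + k) ℚ τ⁻¹ * kron d (n + k) ℚ (Fin.append y x)) := by
  obtain ⟨M, hMH⟩ := TensorFFT.exists_trace_form H
  obtain ⟨b, hb⟩ := TensorFFT.exists_sum_permMat (M := M) (fun g hg => by
    have hdet := (Matrix.isUnit_iff_isUnit_det g).1 hg
    have hK : kron d (n + k) ℚ (fun _ => g) * kron d (n + k) ℚ (fun _ => g⁻¹) = 1 := by
      simp [TensorFFT.kron_mul, TensorFFT.kron_one, Matrix.mul_nonsing_inv _ hdet]
    have hK' : kron d n ℚ (fun _ => g⁻¹) * kron d n ℚ (fun _ => g) = 1 := by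
      simp [TensorFFT.kron_mul, TensorFFT.kron_one, Matrix.nonsing_inv_mul _ hdet]
    -- Equivariance of `H`, tested against conjugated `y`, makes `M` invariant under conjugation.
    have hconj : kron d (n + k) ℚ (fun _ => g⁻¹) * M * kron d (n + k) ℚ (fun _ => g) = M := by
      refine TensorFFT.eq_of_trace_kron fun z => ?_
      obtain ⟨⟨y, x⟩, rfl⟩ := (Fin.appendEquiv n k).surjective z
      change Matrix.trace (_ * kron d (n + k) ℚ (Fin.append y x)) =
        Matrix.trace (_ * kron d (n + k) ℚ (Fin.append y x))
      have happ : (fun i => g * Fin.append y x i * g⁻¹) =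
          Fin.append (fun i => g * y i * g⁻¹) (fun j => g * x j * g⁻¹) := by
        funext i
        refine Fin.addCases (fun i => ?_) (fun i => ?_) i <;> simp
      have hy : kron d n ℚ (fun i => g * y i * g⁻¹) =
          kron d n ℚ (fun _ => g) * kron d n ℚ y * kron d n ℚ (fun _ => g⁻¹) := by
        simp [TensorFFT.kron_mul]
      calc _ = Matrix.trace (M * (kron d (n + k) ℚ (fun _ => g) *
              kron d (n + k) ℚ (Fin.append y x) * kron d (n + k) ℚ (fun _ => g⁻¹))) := by
            rw [Matrix.mul_assoc, Matrix.mul_assoc, Matrix.trace_mul_comm]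
            simp only [Matrix.mul_assoc]
        _ = Matrix.trace (H (fun j => g * x j * g⁻¹) * kron d n ℚ (fun i => g * y i * g⁻¹)) := by
            rw [TensorFFT.kron_mul, TensorFFT.kron_mul, happ, hMH]
        _ = Matrix.trace (kron d n ℚ (fun _ => g) * (H x * kron d n ℚ y) *
              kron d n ℚ (fun _ => g⁻¹)) := by
            rw [hH g hg, hy]
            simp only [Matrix.mul_assoc]
            rw [← Matrix.mul_assoc (kron d n ℚ fun _ => g⁻¹) (kron d n ℚ fun _ => g), hK',
              Matrix.one_mul]
        _ = _ := by
            rw [Matrix.trace_mul_comm, ← Matrix.mul_assoc, hK', Matrix.one_mul, hMH]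
    calc _ = (kron d (n + k) ℚ (fun _ => g) * kron d (n + k) ℚ (fun _ => g⁻¹)) * M *
            kron d (n + k) ℚ (fun _ => g) := by rw [hK, Matrix.one_mul]
      _ = _ := by rw [Matrix.mul_assoc, Matrix.mul_assoc, ← Matrix.mul_assoc _ M, hconj])
  -- The target sum is indexed by the inverses of the permutations in `hb`.
  refine ⟨fun τ => b τ⁻¹, fun x y => ?_⟩
  rw [hMH, hb,
    ← Equiv.sum_comp (Equiv.inv (Equiv.Perm (Fin (n + k))))]
  simp [Finset.sum_mul, Matrix.trace_sum]
end

section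
/- The identity 𝔠_{1,2}(x) = 0 for 2×2 matrices: Let F be a field of characteristic zero and x : Matrix (Fin 2) (Fin 2) F. Then (1 − P_s) * (K(![x, 1]) + K(![1, x]) − Matrix.trace x • 1) = 0 in Matrix (Fin 2 → Fin 2) (Fin 2 → Fin 2) F, where s ∈ Equiv.Perm (Fin 2) is the transposition, 1 denotes the identity matrix of the appropriate size, K(![x, 1]) is the Kronecker product x ⊗ 1 and K(![1, x]) is 1 ⊗ x. -/
theorem permMat_mul_apply {d m : ℕ} {R : Type*} [CommRing R] (σ : Equiv.Perm (Fin m))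
    (M : Matrix (Fin m → Fin d) (Fin m → Fin d) R) (f g : Fin m → Fin d) :
    (permMat d m R σ * M) f g = M (f ∘ σ) g := by
  simp [Matrix.mul_apply, permMat]

/-- **The identity `𝔠_{1,2}(x) = 0` for `2 × 2` matrices:**
`(1 - P_s) * (x ⊗ 1 + 1 ⊗ x - tr(x)·1) = 0`, where `s` is the transposition in `S_2`. -/
theorem c_one_two (F : Type*) [Field F] [CharZero F] (x : Matrix (Fin 2) (Fin 2) F) :
    (1 - permMat 2 2 F (Equiv.swap 0 1)) *
      (kron 2 2 F ![x, 1] + kron 2 2 F ![1, x] - Matrix.trace x • 1) = 0 := by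
  ext f g
  rw [sub_mul, one_mul, Matrix.sub_apply, permMat_mul_apply]
  generalize ha : f 0 = a
  generalize hb : f 1 = b
  generalize hc : g 0 = c
  generalize hd : g 1 = d
  simp only [kron, Matrix.sub_apply, Matrix.add_apply, Matrix.smul_apply, Matrix.of_apply,
    Matrix.one_apply, funext_iff, Fin.prod_univ_two, Fin.forall_fin_two, Function.comp_apply,
    Equiv.swap_apply_left, Equiv.swap_apply_right, Matrix.trace_fin_two, Matrix.cons_val_zero,
    Matrix.cons_val_one, Matrix.zero_apply, ha, hb, hc, hd]
  clear ha hb hc hd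
  fin_cases a <;> fin_cases b <;> fin_cases c <;> fin_cases d <;> simp [add_comm]
end
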